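/- arXiv:2306.14863 — 3 statements merged into one kernel-verified Lean document; each statement's English description precedes it below -/
import Mathlib

section
/- There exist a natural number n and a finite set R of elements of the free group FreeGroup (Fin n) such that membership in the normal closure of R is not a computable predicate; that is, there is a finitely presented group with unsolvable word problem (Novikov 1955, Boone 1959). -/
namespace NB
open Equiv Function

/-- Two commuting permutations and a third one. -/
@[ext] structure Str (Ω : Type) where
  x : Perm Ω
  y : Perm Ω
  t : Perm Ω
  comm : Commute x y

/-- The conjugate `t(p,q)`. -/
def tc {G : Type*} [Group G] (x y t : G) (p q : ℤ) : G := x ^ (-p) * y ^ (-q) * t * y ^ q * x ^ p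

theorem map_tc {G H : Type*} [Group G] [Group H] (f : G →* H) (x y t : G) (p q : ℤ) :
    f (tc x y t p q) = tc (f x) (f y) (f t) p q := by
  simp [tc]

def Str.res {Ω : Type} (s : Str Ω) (a₁ a₂ : ℕ) (b₁ b₂ : ℤ) : Str Ω :=
  ⟨s.x ^ a₁, s.y ^ a₂, tc s.x s.y s.t b₁ b₂, s.comm.pow_pow _ _⟩

structure Hom {Θ Ω : Type} (s : Str Θ) (s' : Str Ω) (f : Θ → Ω) : Prop where
  x : ∀ z, f (s.x z) = s'.x (f z)
  y : ∀ z, f (s.y z) = s'.y (f z)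
  t : ∀ z, f (s.t z) = s'.t (f z)

theorem inv_eqv {Θ Ω : Type} {u : Perm Θ} {v : Perm Ω} {f : Θ → Ω}
    (h : ∀ z, f (u z) = v (f z)) (z : Θ) : f (u⁻¹ z) = v⁻¹ (f z) := by
  rw [Perm.eq_inv_iff_eq, ← h]; simp

theorem pow_eqv {Θ Ω : Type} {u : Perm Θ} {v : Perm Ω} {f : Θ → Ω}
    (h : ∀ z, f (u z) = v (f z)) (n : ℕ) (z : Θ) : f ((u ^ n) z) = (v ^ n) (f z) := by
  induction n generalizing z with
  | zero => simp
  | succ n ih => rw [pow_succ, pow_succ, Perm.mul_apply, Perm.mul_apply, ih, h]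

theorem zpow_eqv {Θ Ω : Type} {u : Perm Θ} {v : Perm Ω} {f : Θ → Ω}
    (h : ∀ z, f (u z) = v (f z)) (n : ℤ) (z : Θ) : f ((u ^ n) z) = (v ^ n) (f z) := by
  cases n with
  | ofNat n => simpa using pow_eqv h n z
  | negSucc n => 
    rw [zpow_negSucc, zpow_negSucc]
    exact inv_eqv (fun z => pow_eqv h (n+1) z) z

theorem Hom.res {Θ Ω : Type} {s : Str Θ} {s' : Str Ω} {f : Θ → Ω} (h : Hom s s' f)
    (a₁ a₂ : ℕ) (b₁ b₂ : ℤ) : Hom (s.res a₁ a₂ b₁ b₂) (s'.res a₁ a₂ b₁ b₂) f := by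
  refine ⟨pow_eqv h.x _, pow_eqv h.y _, fun z => ?_⟩
  simp only [Str.res, tc, Perm.mul_apply, zpow_eqv h.x, zpow_eqv h.y, h.t]

theorem Hom.comp {Θ Ω Ξ : Type} {s : Str Θ} {s' : Str Ω} {s'' : Str Ξ} {f : Θ → Ω} {g : Ω → Ξ}
    (hg : Hom s' s'' g) (hf : Hom s s' f) : Hom s s'' (g ∘ f) :=
  ⟨fun z => by simp [hf.x, hg.x], fun z => by simp [hf.y, hg.y], fun z => by simp [hf.t, hg.t]⟩

/-- Transport of structure. -/
def Str.map {Ω Ω' : Type} (s : Str Ω) (e : Ω ≃ Ω') : Str Ω' :=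
  ⟨e.permCongrHom s.x, e.permCongrHom s.y, e.permCongrHom s.t, s.comm.map e.permCongrHom.toMonoidHom⟩

theorem Str.map_hom {Ω Ω' : Type} (s : Str Ω) (e : Ω ≃ Ω') : Hom s (s.map e) e :=
  ⟨fun z => by simp [Str.map], fun z => by simp [Str.map], fun z => by simp [Str.map]⟩

/-- roots -/
def root {W : Type} (a : ℕ) (u : Perm W) : Perm (ZMod a × W) where
  toFun p := (p.1 + 1, (if p.1 + 1 = 0 then u else 1) p.2)
  invFun p := (p.1 - 1, (if p.1 = 0 then u else 1)⁻¹ p.2)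
  left_inv p := by ext <;> simp
  right_inv p := by ext <;> simp

theorem root_pow_lt {W : Type} (a : ℕ) (u : Perm W) (w : W) (k : ℕ) (hk : k < a) :
    (root a u ^ k) (0, w) = ((k : ZMod a), w) := by
  induction k with
  | zero => simp
  | succ k ih =>
    rw [pow_succ', Perm.mul_apply, ih (by omega)]
    have : ((k : ZMod a) + 1) ≠ 0 := by
      intro h
      have h2 : ((k + 1 : ℕ) : ZMod a) = 0 := by push_cast; exact h
      rw [ZMod.natCast_eq_zero_iff] at h2
      have := Nat.le_of_dvd (by omega) h2
      omega
    simp [root, this]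

theorem root_pow {W : Type} (a : ℕ) (ha : a ≠ 0) (u : Perm W) (w : W) :
    (root a u ^ a) (0, w) = (0, u w) := by
  obtain ⟨k, rfl⟩ := Nat.exists_eq_succ_of_ne_zero ha
  rw [pow_succ', Perm.mul_apply, root_pow_lt _ _ _ _ (by omega)]
  have : ((k : ZMod (k+1)) + 1) = 0 := by
    have := ZMod.natCast_self (k+1)
    push_cast at this
    exact this
  simp [root, this]

theorem exists_ind (s : Str ℕ) (a₁ a₂ : ℕ) (h₁ : a₁ ≠ 0) (h₂ : a₂ ≠ 0) (b₁ b₂ : ℤ) :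
    ∃ (s' : Str ℕ) (f : ℕ → ℕ), Injective f ∧ Hom s (s'.res a₁ a₂ b₁ b₂) f := by
  have : NeZero a₁ := ⟨h₁⟩
  have : NeZero a₂ := ⟨h₂⟩
  -- the commuting roots on `ZMod a₁ × ZMod a₂ × ℕ`
  let X : Perm (ZMod a₁ × (ZMod a₂ × ℕ)) := root a₁ (Equiv.prodCongr (Equiv.refl _) s.x)
  let Y : Perm (ZMod a₁ × (ZMod a₂ × ℕ)) := Equiv.prodCongr (Equiv.refl _) (root a₂ s.y)
  have hXY : Commute X Y := by
    have hc : ∀ n, s.x (s.y n) = s.y (s.x n) := fun n => by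
      rw [← Perm.mul_apply, s.comm.eq, Perm.mul_apply]
    ext ⟨i, j, n⟩ <;> by_cases h : i + 1 = 0 <;> by_cases h' : j + 1 = 0 <;>
      simp [X, Y, root, h, h', hc]
  let V : Perm (ZMod a₁ × (ZMod a₂ × ℕ)) :=
    Perm.prodExtendRight 0 (Perm.prodExtendRight 0 s.t)
  let T := Y ^ b₂ * X ^ b₁ * V * X ^ (-b₁) * Y ^ (-b₂)
  let S : Str (ZMod a₁ × (ZMod a₂ × ℕ)) := ⟨X, Y, T, hXY⟩
  let e : ZMod a₁ × (ZMod a₂ × ℕ) ≃ ℕ := Classical.choice inferInstance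
  let f : ℕ → ZMod a₁ × (ZMod a₂ × ℕ) := fun n => (0, 0, n)
  have hf : Hom s (S.res a₁ a₂ b₁ b₂) f := by
    refine ⟨fun n => ?_, fun n => ?_, fun n => ?_⟩
    · simp only [Str.res, S, X, f]
      rw [root_pow _ h₁]; simp
    · have := pow_eqv (f := fun w : ZMod a₂ × ℕ => ((0 : ZMod a₁), w)) (u := root a₂ s.y) (v := Y)
        (fun z => by simp [Y]) a₂ (0, n)
      simp only [Str.res, S, f]
      rw [← this, root_pow _ h₂]
    · have h : tc X Y T b₁ b₂ = V := by
        simp only [tc, T]; group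
      change f (s.t n) = (tc X Y T b₁ b₂) (f n)
      rw [h]
      simp only [f, V]
      rw [Perm.prodExtendRight_apply_eq, Perm.prodExtendRight_apply_eq]
  refine ⟨S.map e, e ∘ f, e.injective.comp (fun a b h => by simpa [f] using h), ?_⟩
  exact ((S.map_hom e).res a₁ a₂ b₁ b₂).comp hf

section SB
variable {Θ Z : Type} (δ ε : Θ → Z) (f g : Z → Z)

def SBP (z : Z) : Prop := ∃ (n : ℕ) (w : Z), (∀ u, w ≠ δ u) ∧ (∀ u, w = g u → ∃ v, u = ε v) ∧
  z = (g ∘ f)^[n] w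

def SBR (z z' : Z) : Prop := (∃ w, z = δ w ∧ z' = ε w) ∨ (SBP δ ε f g z ∧ z' = f z) ∨
  (¬ SBP δ ε f g z ∧ z = g z' ∧ ∀ w, z' ≠ ε w)

variable {δ ε f g}

theorem SBP_eqv {θ : Perm Θ} {α β : Perm Z} (hδ : ∀ z, δ (θ z) = α (δ z))
    (hε : ∀ z, ε (θ z) = β (ε z)) (hf : ∀ z, f (α z) = β (f z)) (hg : ∀ z, g (β z) = α (g z))
    {z : Z} (h : SBP δ ε f g z) : SBP δ ε f g (α z) := by
  obtain ⟨n, w, h1, h2, rfl⟩ := h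
  refine ⟨n, α w, fun u hu => h1 (θ⁻¹ u) ?_, fun u hu => ?_, ?_⟩
  · rw [inv_eqv hδ, Perm.eq_inv_iff_eq, hu]
  · obtain ⟨v, hv⟩ := h2 (β⁻¹ u) (by rw [inv_eqv hg, Perm.eq_inv_iff_eq, hu])
    refine ⟨θ v, ?_⟩
    rw [hε, ← hv]; simp
  · have : Semiconj α (g ∘ f) (g ∘ f) := fun z => by simp [hf, hg]
    exact (this.iterate_right n w)

theorem SBR_eqv {θ : Perm Θ} {α β : Perm Z} (hδ : ∀ z, δ (θ z) = α (δ z))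
    (hε : ∀ z, ε (θ z) = β (ε z)) (hf : ∀ z, f (α z) = β (f z)) (hg : ∀ z, g (β z) = α (g z))
    {z z' : Z} (h : SBR δ ε f g z z') : SBR δ ε f g (α z) (β z') := by
  rcases h with ⟨w, rfl, rfl⟩ | ⟨h1, rfl⟩ | ⟨h1, rfl, h2⟩
  · exact Or.inl ⟨θ w, (hδ _).symm, (hε _).symm⟩
  · exact Or.inr (Or.inl ⟨SBP_eqv hδ hε hf hg h1, (hf _).symm⟩)
  · refine Or.inr (Or.inr ⟨fun h => h1 ?_, (hg _).symm, fun w hw => h2 (θ⁻¹ w) ?_⟩)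
    · have := SBP_eqv (inv_eqv hδ) (inv_eqv hε) (inv_eqv hf) (inv_eqv hg) h
      simpa using this
    · rw [inv_eqv hε, Perm.eq_inv_iff_eq, hw]

theorem SBP_ne (dg : ∀ z w, g z ≠ δ w) {z : Z} (h : SBP δ ε f g z) (w : Θ) : z ≠ δ w := by
  obtain ⟨n, w', h1, h2, rfl⟩ := h
  cases n with
  | zero => exact h1 w
  | succ n => rw [iterate_succ_apply']; exact dg _ _

theorem SBP_step {z : Z} (h : SBP δ ε f g z) : SBP δ ε f g (g (f z)) := by
  obtain ⟨n, w', h1, h2, rfl⟩ := h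
  exact ⟨n + 1, w', h1, h2, by rw [iterate_succ_apply']; rfl⟩

/-- equivariant Schroeder-Bernstein, relative version -/
theorem exists_ext (sΘ : Str Θ) (A B : Str Z)
    (hδ : Hom sΘ A δ) (hε : Hom sΘ B ε) (hf : Hom A B f) (hg : Hom B A g)
    (iδ : Injective δ) (iε : Injective ε) (jf : Injective f) (jg : Injective g)
    (df : ∀ z w, f z ≠ ε w) (dg : ∀ z w, g z ≠ δ w) :
    ∃ r : Perm Z, Hom A B r ∧ ∀ w, r (δ w) = ε w := by
  have tot : ∀ z, ∃ z', SBR δ ε f g z z' := by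
    intro z
    by_cases h1 : ∃ w, z = δ w
    · obtain ⟨w, rfl⟩ := h1
      exact ⟨ε w, Or.inl ⟨w, rfl, rfl⟩⟩
    by_cases h2 : SBP δ ε f g z
    · exact ⟨f z, Or.inr (Or.inl ⟨h2, rfl⟩)⟩
    have : ∃ u, z = g u ∧ ∀ v, u ≠ ε v := by
      by_contra! h
      exact h2 ⟨0, z, fun u hu => h1 ⟨u, hu⟩, h, rfl⟩
    obtain ⟨u, hu, hv⟩ := this
    exact ⟨u, Or.inr (Or.inr ⟨h2, hu, hv⟩)⟩
  have sur : ∀ z', ∃ z, SBR δ ε f g z z' := by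
    intro z'
    by_cases h1 : ∃ w, z' = ε w
    · obtain ⟨w, rfl⟩ := h1
      exact ⟨δ w, Or.inl ⟨w, rfl, rfl⟩⟩
    push Not at h1
    by_cases h2 : SBP δ ε f g (g z')
    · obtain ⟨n, w, h3, h4, h5⟩ := h2
      cases n with
      | zero => 
        obtain ⟨v, hv⟩ := h4 z' h5.symm
        exact absurd hv (h1 v)
      | succ n =>
        rw [iterate_succ_apply'] at h5
        exact ⟨_, Or.inr (Or.inl ⟨⟨n, w, h3, h4, rfl⟩, jg h5⟩)⟩
    · exact ⟨g z', Or.inr (Or.inr ⟨h2, rfl, h1⟩)⟩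
  have uniq : ∀ z z₁ z₂, SBR δ ε f g z z₁ → SBR δ ε f g z z₂ → z₁ = z₂ := by
    rintro z z₁ z₂ (⟨w, h1, h2⟩ | ⟨h1, h2⟩ | ⟨h1, h2, h3⟩) (⟨w', h1', h2'⟩ | ⟨h1', h2'⟩ | ⟨h1', h2', h3'⟩)
    · rw [h2, h2', iδ (h1.symm.trans h1')]
    · exact absurd h1 (SBP_ne dg h1' _)
    · exact absurd (h2'.symm.trans h1) (dg _ _)
    · exact absurd h1' (SBP_ne dg h1 _)
    · rw [h2, h2']
    · exact absurd h1 h1'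
    · exact absurd (h2.symm.trans h1') (dg _ _)
    · exact absurd h1' h1
    · exact jg (h2.symm.trans h2')
  have inj : ∀ z₁ z₂ z, SBR δ ε f g z₁ z → SBR δ ε f g z₂ z → z₁ = z₂ := by
    rintro z₁ z₂ z (⟨w, h1, h2⟩ | ⟨h1, h2⟩ | ⟨h1, h2, h3⟩) (⟨w', h1', h2'⟩ | ⟨h1', h2'⟩ | ⟨h1', h2', h3'⟩)
    · rw [h1, h1', iε (h2.symm.trans h2')]
    · exact absurd (h2'.symm.trans h2) (df _ _)
    · exact absurd h2 (h3' _)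
    · exact absurd (h2.symm.trans h2') (df _ _)
    · exact jf (h2.symm.trans h2')
    · refine absurd ?_ h1'
      rw [h2', h2]; exact SBP_step h1
    · exact absurd h2' (h3 _)
    · refine absurd ?_ h1
      rw [h2, h2']; exact SBP_step h1'
    · rw [h2, h2']
  choose r hr using tot
  have hb : Bijective r := by
    refine ⟨fun z₁ z₂ h => inj _ _ _ (hr z₁) (h ▸ hr z₂), fun z' => ?_⟩
    obtain ⟨z, hz⟩ := sur z'
    exact ⟨z, uniq _ _ _ (hr z) hz⟩
  refine ⟨Equiv.ofBijective r hb, ⟨fun z => ?_, fun z => ?_, fun z => ?_⟩, fun w => ?_⟩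
  · exact uniq _ _ _ (hr _) (SBR_eqv hδ.x hε.x hf.x hg.x (hr z))
  · exact uniq _ _ _ (hr _) (SBR_eqv hδ.y hε.y hf.y hg.y (hr z))
  · exact uniq _ _ _ (hr _) (SBR_eqv hδ.t hε.t hf.t hg.t (hr z))
  · exact uniq _ _ _ (hr _) (Or.inl ⟨w, rfl, rfl⟩)

end SB

/-! ### The big set -/

abbrev Big : Type := Σ _ : Str ℕ × List (Str ℕ), ℕ

def big : Str Big where
  x := Equiv.sigmaCongrRight fun p => p.1.x
  y := Equiv.sigmaCongrRight fun p => p.1.y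
  t := Equiv.sigmaCongrRight fun p => p.1.t
  comm := by
    refine Equiv.ext fun ⟨p, n⟩ => ?_
    have := congrArg (fun u => u n) p.1.comm.eq
    simp only [Perm.mul_apply] at this
    simp [this]

theorem big_hom (p : Str ℕ × List (Str ℕ)) : Hom p.1 big (fun n => (⟨p, n⟩ : Big)) :=
  ⟨fun _ => rfl, fun _ => rfl, fun _ => rfl⟩

theorem exists_push (a₁ a₂ : ℕ) (b₁ b₂ : ℤ) (c₁ c₂ : ℕ) (h₁ : c₁ ≠ 0) (h₂ : c₂ ≠ 0) (d₁ d₂ : ℤ) :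
    ∃ f : Big → Big, Injective f ∧ Hom (big.res a₁ a₂ b₁ b₂) (big.res c₁ c₂ d₁ d₂) f ∧
      ∀ z, (f z).1.2 ≠ [] := by
  choose s' e he hh using fun s : Str ℕ => exists_ind (s.res a₁ a₂ b₁ b₂) c₁ c₂ h₁ h₂ d₁ d₂
  have key : ∀ p : Str ℕ × List (Str ℕ), Hom (p.1.res a₁ a₂ b₁ b₂) (big.res c₁ c₂ d₁ d₂)
      (fun n => (⟨(s' p.1, p.1 :: p.2), e p.1 n⟩ : Big)) := fun p =>
    ((big_hom (s' p.1, p.1 :: p.2)).res c₁ c₂ d₁ d₂).comp (hh p.1)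
  refine ⟨fun z => ⟨(s' z.1.1, z.1.1 :: z.1.2), e z.1.1 z.2⟩, ?_, ⟨?_, ?_, ?_⟩, fun z => by simp⟩
  · rintro ⟨⟨s, L⟩, n⟩ ⟨⟨s₁, L₁⟩, n₁⟩ h
    simp only [Sigma.mk.injEq, Prod.mk.injEq, List.cons.injEq, heq_eq_eq] at h
    obtain ⟨⟨_, rfl, rfl⟩, h⟩ := h
    rw [he s h]
  · rintro ⟨p, n⟩
    rw [← ((big_hom p).res a₁ a₂ b₁ b₂).x n]
    exact (key p).x n
  · rintro ⟨p, n⟩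
    rw [← ((big_hom p).res a₁ a₂ b₁ b₂).y n]
    exact (key p).y n
  · rintro ⟨p, n⟩
    rw [← ((big_hom p).res a₁ a₂ b₁ b₂).t n]
    exact (key p).t n

/-! ### The base structure -/

abbrev Base : Type := Option (ℤ × ℤ) × (ℤ × ℤ)

open Classical in
noncomputable def baseT (S : Set (ℤ × ℤ)) : Base → Base
  | (none, v) => if v ∈ S then (none, v) else (some v, 0)
  | (some v, w) => if w = 0 ∧ v ∉ S then (none, v) else (some v, w)

theorem baseT_invol (S : Set (ℤ × ℤ)) : Involutive (baseT S) := by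
  rintro ⟨_ | v, w⟩
  · by_cases h : w ∈ S <;> simp [baseT, h]
  · by_cases h : w = 0 ∧ v ∉ S
    · simp [baseT, h]
    · simp only [baseT, h, if_false]

noncomputable def base (S : Set (ℤ × ℤ)) : Str Base where
  x := Equiv.prodCongr (Equiv.refl _) (Equiv.addRight (1, 0))
  y := Equiv.prodCongr (Equiv.refl _) (Equiv.addRight (0, 1))
  t := (baseT_invol S).toPerm
  comm := by ext ⟨o, p, q⟩ <;> simp

theorem base_x_pow (S : Set (ℤ × ℤ)) (n : ℕ) (o : Option (ℤ × ℤ)) (v : ℤ × ℤ) :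
    ((base S).x ^ n) (o, v) = (o, v.1 + n, v.2) := by
  induction n generalizing v with
  | zero => simp
  | succ n ih => rw [pow_succ, Perm.mul_apply]; simp [base] at ih ⊢; rw [ih]; simp; ring

theorem base_y_pow (S : Set (ℤ × ℤ)) (n : ℕ) (o : Option (ℤ × ℤ)) (v : ℤ × ℤ) :
    ((base S).y ^ n) (o, v) = (o, v.1, v.2 + n) := by
  induction n generalizing v with
  | zero => simp
  | succ n ih => rw [pow_succ, Perm.mul_apply]; simp [base] at ih ⊢; rw [ih]; simp; ring

theorem base_x_zpow (S : Set (ℤ × ℤ)) (n : ℤ) (o : Option (ℤ × ℤ)) (v : ℤ × ℤ) :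
    ((base S).x ^ n) (o, v) = (o, v.1 + n, v.2) := by
  cases n with
  | ofNat n => simpa using base_x_pow S n o v
  | negSucc n => rw [zpow_negSucc, Perm.inv_eq_iff_eq, base_x_pow]; ext <;> simp [Int.negSucc_eq]; ring

theorem base_y_zpow (S : Set (ℤ × ℤ)) (n : ℤ) (o : Option (ℤ × ℤ)) (v : ℤ × ℤ) :
    ((base S).y ^ n) (o, v) = (o, v.1, v.2 + n) := by
  cases n with
  | ofNat n => simpa using base_y_pow S n o v
  | negSucc n => rw [zpow_negSucc, Perm.inv_eq_iff_eq, base_y_pow]; ext <;> simp [Int.negSucc_eq]; ring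

theorem base_tc (S : Set (ℤ × ℤ)) (b₁ b₂ : ℤ) (o : Option (ℤ × ℤ)) (v : ℤ × ℤ) :
    tc (base S).x (base S).y (base S).t b₁ b₂ (o, v) =
      ((baseT S (o, v.1 + b₁, v.2 + b₂)).1, (baseT S (o, v.1 + b₁, v.2 + b₂)).2.1 - b₁,
        (baseT S (o, v.1 + b₁, v.2 + b₂)).2.2 - b₂) := by
  simp only [tc, Perm.mul_apply, base_x_zpow, base_y_zpow]
  change ((base S).x ^ (-b₁)) (((base S).y ^ (-b₂)) (baseT S (o, v.1 + b₁, v.2 + b₂))) = _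
  generalize baseT S (o, v.1 + b₁, v.2 + b₂) = z
  obtain ⟨o', v'⟩ := z
  rw [base_y_zpow, base_x_zpow]
  simp [sub_eq_add_neg]

theorem tc_base_zero (S : Set (ℤ × ℤ)) (v : ℤ × ℤ) :
    tc (base S).x (base S).y (base S).t v.1 v.2 (none, 0) = (none, 0) ↔ v ∈ S := by
  rw [base_tc]
  by_cases h : v ∈ S <;> simp [baseT, h]

/-- the parametrization of the domain of a stable letter -/
def del (a₁ a₂ : ℕ) (b₁ b₂ : ℤ) : Base → Base
  | (none, k) => (none, a₁ * k.1, a₂ * k.2)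
  | (some k, l) => (some (a₁ * k.1 + b₁, a₂ * k.2 + b₂), a₁ * l.1 - b₁, a₂ * l.2 - b₂)

theorem del_inj (a₁ a₂ : ℕ) (b₁ b₂ : ℤ) (h₁ : a₁ ≠ 0) (h₂ : a₂ ≠ 0) : Injective (del a₁ a₂ b₁ b₂) := by
  rintro ⟨_ | k, l⟩ ⟨_ | k', l'⟩ h <;> simp [del, h₁, h₂] at h ⊢
  · exact Prod.ext h.1 h.2
  · exact ⟨Prod.ext h.1.1 h.1.2, Prod.ext h.2.1 h.2.2⟩

theorem del_hom (S : Set (ℤ × ℤ)) (a₁ a₂ : ℕ) (b₁ b₂ : ℤ) (h₁ : a₁ ≠ 0) (h₂ : a₂ ≠ 0) :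
    Hom (base {k | (a₁ * k.1 + b₁, a₂ * k.2 + b₂) ∈ S}) ((base S).res a₁ a₂ b₁ b₂)
      (del a₁ a₂ b₁ b₂) := by
  refine ⟨?_, ?_, ?_⟩
  · rintro ⟨_ | k, l⟩
    · simp only [Str.res, del, base_x_pow]
      simp [base]; ring
    · simp only [Str.res, del, base_x_pow]
      simp [base]; ring
  · rintro ⟨_ | k, l⟩
    · simp only [Str.res, del, base_y_pow]
      simp [base]; ring
    · simp only [Str.res, del, base_y_pow]
      simp [base]; ring
  · rintro ⟨_ | k, l⟩
    · simp only [Str.res, del, base_tc]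
      simp only [base, Involutive.coe_toPerm]
      by_cases h : (a₁ * l.1 + b₁, a₂ * l.2 + b₂) ∈ S <;> simp [baseT, h]
    · simp only [Str.res, del, base_tc]
      simp only [base, Involutive.coe_toPerm]
      by_cases h : l = 0 ∧ (a₁ * k.1 + b₁, a₂ * k.2 + b₂) ∉ S
      · obtain ⟨rfl, h⟩ := h
        simp [baseT, h]
      · have h' : ¬ ((a₁ * l.1 - b₁ + b₁, a₂ * l.2 - b₂ + b₂) = (0 : ℤ × ℤ) ∧
            (a₁ * k.1 + b₁, a₂ * k.2 + b₂) ∉ S) := by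
          rintro ⟨h3, h4⟩
          simp [h₁, h₂] at h3
          exact h ⟨Prod.ext h3.1 h3.2, h4⟩
        simp only [baseT, Set.mem_ofPred_eq, h, h', if_false]
        simp

/-! ### Rules and the model -/

structure Rule where
  a₁ : ℕ
  a₂ : ℕ
  b₁ : ℤ
  b₂ : ℤ
  c₁ : ℕ
  c₂ : ℕ
  d₁ : ℤ
  d₂ : ℤ
  ha₁ : a₁ ≠ 0
  ha₂ : a₂ ≠ 0
  hc₁ : c₁ ≠ 0
  hc₂ : c₂ ≠ 0

def Rule.lhs (ρ : Rule) (k : ℤ × ℤ) : ℤ × ℤ := (ρ.a₁ * k.1 + ρ.b₁, ρ.a₂ * k.2 + ρ.b₂)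
def Rule.rhs (ρ : Rule) (k : ℤ × ℤ) : ℤ × ℤ := (ρ.c₁ * k.1 + ρ.d₁, ρ.c₂ * k.2 + ρ.d₂)

theorem exists_perm (S : Set (ℤ × ℤ)) : ∃ (z₀ : Big), 
    (∀ v : ℤ × ℤ, tc big.x big.y big.t v.1 v.2 z₀ = z₀ ↔ v ∈ S) ∧
    ∀ ρ : Rule, (∀ k, ρ.lhs k ∈ S ↔ ρ.rhs k ∈ S) →
      ∃ r : Perm Big, Hom (big.res ρ.a₁ ρ.a₂ ρ.b₁ ρ.b₂) (big.res ρ.c₁ ρ.c₂ ρ.d₁ ρ.d₂) r ∧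
        r z₀ = z₀ := by
  let e : Base ≃ ℕ := Classical.choice inferInstance
  let j : Base → Big := fun w => ⟨((base S).map e, []), e w⟩
  have jj : Injective j := fun u v h => by simpa [j] using h
  have hj : Hom (base S) big j := (big_hom ((base S).map e, [])).comp ((base S).map_hom e)
  refine ⟨j (none, 0), fun v => ?_, fun ρ hρ => ?_⟩
  · have := (hj.res 1 1 v.1 v.2).t (none, 0)
    simp only [Str.res] at this
    rw [← this, jj.eq_iff, tc_base_zero]
  · obtain ⟨f, jf, hf, nf⟩ := exists_push ρ.a₁ ρ.a₂ ρ.b₁ ρ.b₂ ρ.c₁ ρ.c₂ ρ.hc₁ ρ.hc₂ ρ.d₁ ρ.d₂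
    obtain ⟨g, jg, hg, ng⟩ := exists_push ρ.c₁ ρ.c₂ ρ.d₁ ρ.d₂ ρ.a₁ ρ.a₂ ρ.ha₁ ρ.ha₂ ρ.b₁ ρ.b₂
    have h1 := (hj.res ρ.a₁ ρ.a₂ ρ.b₁ ρ.b₂).comp (del_hom S ρ.a₁ ρ.a₂ ρ.b₁ ρ.b₂ ρ.ha₁ ρ.ha₂)
    have h2 := (hj.res ρ.c₁ ρ.c₂ ρ.d₁ ρ.d₂).comp (del_hom S ρ.c₁ ρ.c₂ ρ.d₁ ρ.d₂ ρ.hc₁ ρ.hc₂)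
    have hS : {k : ℤ × ℤ | (ρ.a₁ * k.1 + ρ.b₁, ρ.a₂ * k.2 + ρ.b₂) ∈ S} =
      {k : ℤ × ℤ | (ρ.c₁ * k.1 + ρ.d₁, ρ.c₂ * k.2 + ρ.d₂) ∈ S} := Set.ext hρ
    rw [hS] at h1
    obtain ⟨r, hr, hr'⟩ := exists_ext _ _ _ h1 h2 hf hg
      (jj.comp (del_inj _ _ _ _ ρ.ha₁ ρ.ha₂)) (jj.comp (del_inj _ _ _ _ ρ.hc₁ ρ.hc₂)) jf jg
      (fun z w h => nf z (by rw [h]; rfl)) (fun z w h => ng z (by rw [h]; rfl))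
    refine ⟨r, hr, ?_⟩
    have := hr' (none, 0)
    simpa [del, ← Prod.zero_eq_mk] using this

/-- action on the first factor -/
def fstHom (Z : Type) : Perm Z →* Perm (Z × Bool) where
  toFun g := Equiv.prodCongr g (Equiv.refl _)
  map_one' := by ext <;> simp
  map_mul' a b := by ext <;> simp

theorem fstHom_commute (Z : Type) [DecidableEq (Z × Bool)] (z : Z) (g : Perm Z) :
    Commute (Equiv.swap (z, false) (z, true)) (fstHom Z g) ↔ g z = z := by
  constructor
  · intro h
    have := congrArg (fun u => u (z, false)) h.eq
    simp only [Perm.mul_apply, swap_apply_left] at this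
    by_contra hne
    have h2 : fstHom Z g (z, false) = (g z, false) := rfl
    have h3 : fstHom Z g (z, true) = (g z, true) := rfl
    rw [h2, h3, swap_apply_of_ne_of_ne (by simp [hne]) (by simp)] at this
    simp at this
  · intro h
    have h2 : fstHom Z g (z, false) = (z, false) := by simp [fstHom, h]
    have h3 : fstHom Z g (z, true) = (z, true) := by simp [fstHom, h]
    have := Equiv.mul_swap_eq_swap_mul (fstHom Z g) (z, false) (z, true)
    rw [h2, h3] at this
    exact this.symm

/-- The relations, in any group. -/
structure Rels {G : Type*} [Group G] {ι : Type*} (ρ : ι → Rule) (v₀ : ℤ × ℤ) (x y t k : G)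
    (r : ι → G) : Prop where
  xy : Commute x y
  kt : Commute k (tc x y t v₀.1 v₀.2)
  kr : ∀ i, Commute k (r i)
  rx : ∀ i, r i * x ^ (ρ i).a₁ = x ^ (ρ i).c₁ * r i
  ry : ∀ i, r i * y ^ (ρ i).a₂ = y ^ (ρ i).c₂ * r i
  rt : ∀ i, r i * tc x y t (ρ i).b₁ (ρ i).b₂ = tc x y t (ρ i).d₁ (ρ i).d₂ * r i

theorem exists_rels {ι : Type*} (ρ : ι → Rule) (v₀ : ℤ × ℤ) (S : Set (ℤ × ℤ)) (h₀ : v₀ ∈ S)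
    (hS : ∀ i k, (ρ i).lhs k ∈ S ↔ (ρ i).rhs k ∈ S) :
    ∃ (x y t k : Perm (Big × Bool)) (r : ι → Perm (Big × Bool)), Rels ρ v₀ x y t k r ∧
      ∀ v : ℤ × ℤ, Commute k (tc x y t v.1 v.2) → v ∈ S := by
  classical
  obtain ⟨z₀, hz, h⟩ := exists_perm S
  choose r hr hrz using fun i => h (ρ i) (hS i)
  refine ⟨fstHom _ big.x, fstHom _ big.y, fstHom _ big.t, swap (z₀, false) (z₀, true),
    fun i => fstHom _ (r i), ⟨big.comm.map _, ?_, fun i => ?_, fun i => ?_, fun i => ?_,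
    fun i => ?_⟩, fun v hv => ?_⟩
  · rw [← map_tc, fstHom_commute, hz]; exact h₀
  · rw [fstHom_commute, hrz]
  · rw [← map_pow, ← map_pow, ← map_mul, ← map_mul]
    exact congrArg _ (Equiv.ext (hr i).x)
  · rw [← map_pow, ← map_pow, ← map_mul, ← map_mul]
    exact congrArg _ (Equiv.ext (hr i).y)
  · rw [← map_tc, ← map_tc, ← map_mul, ← map_mul]
    exact congrArg _ (Equiv.ext (hr i).t)
  · rwa [← map_tc, fstHom_commute, hz] at hv

theorem tc_add {G : Type*} [Group G] {x y : G} (t : G) (hxy : Commute x y) (p q p' q' : ℤ) :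
    tc x y t (p + p') (q + q') = x ^ (-p) * y ^ (-q) * tc x y t p' q' * (x ^ (-p) * y ^ (-q))⁻¹ := by
  have h : x ^ (-p') * y ^ (-q) = y ^ (-q) * x ^ (-p') := (hxy.zpow_zpow _ _).eq
  have h' : y ^ q * x ^ p' = x ^ p' * y ^ q := (hxy.zpow_zpow _ _).eq.symm
  have e1 : x ^ (-(p + p')) * y ^ (-(q + q')) = x ^ (-p) * y ^ (-q) * (x ^ (-p') * y ^ (-q')) := by
    rw [neg_add, neg_add, zpow_add, zpow_add, mul_assoc, mul_assoc, ← mul_assoc _ (y ^ (-q)), h]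
    simp only [mul_assoc]
  have e2 : y ^ (q + q') * x ^ (p + p') = (y ^ q' * x ^ p') * (y ^ q * x ^ p) := by
    rw [add_comm q, add_comm p, zpow_add, zpow_add, mul_assoc, mul_assoc, ← mul_assoc (y ^ q), h']
    simp only [mul_assoc]
  have e3 : (x ^ (-p) * y ^ (-q))⁻¹ = y ^ q * x ^ p := by simp
  rw [e3]
  simp only [tc]
  calc _ = (x ^ (-(p + p')) * y ^ (-(q + q'))) * t * (y ^ (q + q') * x ^ (p + p')) := by
        simp only [mul_assoc]
    _ = _ := by rw [e1, e2]; simp only [mul_assoc]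

theorem Rels.closed {G : Type*} [Group G] {ι : Type*} {ρ : ι → Rule} {v₀ : ℤ × ℤ} {x y t k : G}
    {r : ι → G} (h : Rels ρ v₀ x y t k r) (i : ι) (n : ℤ × ℤ)
    (hk : Commute k (tc x y t ((ρ i).rhs n).1 ((ρ i).rhs n).2)) :
    Commute k (tc x y t ((ρ i).lhs n).1 ((ρ i).lhs n).2) := by
  have hx : SemiconjBy (r i) (x ^ (ρ i).a₁) (x ^ (ρ i).c₁) := h.rx i
  have hy : SemiconjBy (r i) (y ^ (ρ i).a₂) (y ^ (ρ i).c₂) := h.ry i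
  have ht : SemiconjBy (r i) (tc x y t (ρ i).b₁ (ρ i).b₂) (tc x y t (ρ i).d₁ (ρ i).d₂) := h.rt i
  have hx' : SemiconjBy (r i) (x ^ (-((ρ i).a₁ * n.1))) (x ^ (-((ρ i).c₁ * n.1))) := by
    have := hx.zpow_right (-n.1)
    rw [← zpow_natCast, ← zpow_natCast, ← zpow_mul, ← zpow_mul] at this
    simpa using this
  have hy' : SemiconjBy (r i) (y ^ (-((ρ i).a₂ * n.2))) (y ^ (-((ρ i).c₂ * n.2))) := by
    have := hy.zpow_right (-n.2)
    rw [← zpow_natCast, ← zpow_natCast, ← zpow_mul, ← zpow_mul] at this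
    simpa using this
  have key : SemiconjBy (r i) (tc x y t ((ρ i).lhs n).1 ((ρ i).lhs n).2)
      (tc x y t ((ρ i).rhs n).1 ((ρ i).rhs n).2) := by
    simp only [Rule.lhs, Rule.rhs]
    rw [tc_add t h.xy, tc_add t h.xy]
    exact ((hx'.mul_right hy').mul_right ht).mul_right (hx'.mul_right hy').inv_right
  have e : tc x y t ((ρ i).lhs n).1 ((ρ i).lhs n).2 =
      (r i)⁻¹ * tc x y t ((ρ i).rhs n).1 ((ρ i).rhs n).2 * r i := by
    rw [mul_assoc, ← key.eq, inv_mul_cancel_left]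
  rw [e]
  exact ((h.kr i).inv_right.mul_right hk).mul_right (h.kr i)

/-! ### The presentation -/

def cm {G : Type*} [Group G] (a b : G) : G := a * b * (b * a)⁻¹

theorem map_cm {G H : Type*} [Group G] [Group H] (φ : G →* H) (a b : G) :
    φ (cm a b) = 1 ↔ Commute (φ a) (φ b) := by
  rw [cm, map_mul, map_inv, mul_inv_eq_one, map_mul, map_mul]
  exact Iff.rfl

section Pres
variable {N : ℕ}

def gx : Fin (4 + N) := Fin.castAdd N 0
def gy : Fin (4 + N) := Fin.castAdd N 1
def gt : Fin (4 + N) := Fin.castAdd N 2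
def gk : Fin (4 + N) := Fin.castAdd N 3
def gr (i : Fin N) : Fin (4 + N) := Fin.natAdd 4 i

abbrev fg (i : Fin (4 + N)) : FreeGroup (Fin (4 + N)) := FreeGroup.of i

open Classical in
noncomputable def relators (ρ : Fin N → Rule) (v₀ : ℤ × ℤ) : Finset (FreeGroup (Fin (4 + N))) :=
  {cm (fg gx) (fg gy), cm (fg gk) (tc (fg gx) (fg gy) (fg gt) v₀.1 v₀.2)} ∪
  Finset.univ.image (fun i => cm (fg gk) (fg (gr i))) ∪
  Finset.univ.image (fun i => fg (gr i) * fg gx ^ (ρ i).a₁ * (fg gx ^ (ρ i).c₁ * fg (gr i))⁻¹) ∪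
  Finset.univ.image (fun i => fg (gr i) * fg gy ^ (ρ i).a₂ * (fg gy ^ (ρ i).c₂ * fg (gr i))⁻¹) ∪
  Finset.univ.image (fun i => fg (gr i) * tc (fg gx) (fg gy) (fg gt) (ρ i).b₁ (ρ i).b₂ *
    (tc (fg gx) (fg gy) (fg gt) (ρ i).d₁ (ρ i).d₂ * fg (gr i))⁻¹)

theorem relators_iff {H : Type*} [Group H] (ρ : Fin N → Rule) (v₀ : ℤ × ℤ)
    (φ : FreeGroup (Fin (4 + N)) →* H) :
    (∀ w ∈ relators ρ v₀, φ w = 1) ↔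
      Rels ρ v₀ (φ (fg gx)) (φ (fg gy)) (φ (fg gt)) (φ (fg gk)) (fun i => φ (fg (gr i))) := by
  have e1 : ∀ a b : FreeGroup (Fin (4 + N)), φ (cm a b) = 1 ↔ Commute (φ a) (φ b) := fun a b => by
    exact map_cm φ a b
  have e2 : ∀ a b : FreeGroup (Fin (4 + N)), φ (a * b⁻¹) = 1 ↔ φ a = φ b := fun a b => by
    rw [map_mul, map_inv, mul_inv_eq_one]
  constructor
  · intro h
    refine ⟨?_, ?_, fun i => ?_, fun i => ?_, fun i => ?_, fun i => ?_⟩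
    · exact (e1 _ _).1 (h _ (by simp [relators]))
    · rw [← map_tc]; exact (e1 _ _).1 (h _ (by simp [relators]))
    · exact (e1 _ _).1 (h _ (by simp [relators]))
    · have := (e2 _ _).1 (h (fg (gr i) * fg gx ^ (ρ i).a₁ * (fg gx ^ (ρ i).c₁ * fg (gr i))⁻¹)
        (by simp only [relators, Finset.mem_union, Finset.mem_image]; simp))
      simpa using this
    · have := (e2 _ _).1 (h (fg (gr i) * fg gy ^ (ρ i).a₂ * (fg gy ^ (ρ i).c₂ * fg (gr i))⁻¹)
        (by simp only [relators, Finset.mem_union, Finset.mem_image]; simp))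
      simpa using this
    · have := (e2 _ _).1 (h (fg (gr i) * tc (fg gx) (fg gy) (fg gt) (ρ i).b₁ (ρ i).b₂ *
          (tc (fg gx) (fg gy) (fg gt) (ρ i).d₁ (ρ i).d₂ * fg (gr i))⁻¹)
        (by simp only [relators, Finset.mem_union, Finset.mem_image]; simp))
      simpa [map_tc] using this
  · intro h w hw
    simp only [relators, Finset.mem_union, Finset.mem_image, Finset.mem_univ, true_and,
      Finset.mem_insert, Finset.mem_singleton] at hw
    rcases hw with ((((rfl | rfl) | ⟨i, rfl⟩) | ⟨i, rfl⟩) | ⟨i, rfl⟩) | ⟨i, rfl⟩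
    · exact (e1 _ _).2 h.xy
    · rw [e1, map_tc]; exact h.kt
    · exact (e1 _ _).2 (h.kr i)
    · rw [e2]; simpa using h.rx i
    · rw [e2]; simpa using h.ry i
    · rw [e2]; simpa [map_tc] using h.rt i

theorem pres_iff (ρ : Fin N → Rule) (v₀ : ℤ × ℤ) (S : Set (ℤ × ℤ)) (h₀ : v₀ ∈ S)
    (hS : ∀ i k, (ρ i).lhs k ∈ S ↔ (ρ i).rhs k ∈ S)
    (hmin : ∀ C : Set (ℤ × ℤ), v₀ ∈ C → (∀ i k, (ρ i).rhs k ∈ C → (ρ i).lhs k ∈ C) → S ⊆ C)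
    (v : ℤ × ℤ) :
    cm (fg gk) (tc (fg gx) (fg gy) (fg gt) v.1 v.2) ∈
      Subgroup.normalClosure (relators ρ v₀ : Set (FreeGroup (Fin (4 + N)))) ↔ v ∈ S := by
  constructor
  · intro h
    obtain ⟨x, y, t, k, r, hr, hv⟩ := exists_rels ρ v₀ S h₀ hS
    apply hv
    let φ : FreeGroup (Fin (4 + N)) →* Perm (Big × Bool) :=
      FreeGroup.lift (Fin.append ![x, y, t, k] r)
    have ex : φ (fg gx) = x := by simp [φ, gx, fg]
    have ey : φ (fg gy) = y := by simp [φ, gy, fg]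
    have et : φ (fg gt) = t := by simp [φ, gt, fg]
    have ek : φ (fg gk) = k := by simp [φ, gk, fg]
    have er : (fun i => φ (fg (gr i))) = r := by ext1 i; simp [φ, gr, fg]
    have hφ := (relators_iff ρ v₀ φ).2 (by rw [ex, ey, et, ek, er]; exact hr)
    have hle : Subgroup.normalClosure (relators ρ v₀ : Set (FreeGroup (Fin (4 + N)))) ≤ φ.ker :=
      Subgroup.normalClosure_le_normal fun w hw => hφ w hw
    have := hle h
    rw [MonoidHom.mem_ker, map_cm, map_tc,
      ex, ey, et, ek] at this
    exact this
  · intro h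
    let φ := QuotientGroup.mk' (Subgroup.normalClosure
      (relators ρ v₀ : Set (FreeGroup (Fin (4 + N)))))
    have hker : ∀ w, φ w = 1 ↔ w ∈ Subgroup.normalClosure
      (relators ρ v₀ : Set (FreeGroup (Fin (4 + N)))) := fun w => QuotientGroup.eq_one_iff w
    have hr := (relators_iff ρ v₀ φ).1 fun w hw =>
      (hker w).2 (Subgroup.subset_normalClosure hw)
    have := hmin {v | Commute (φ (fg gk)) (tc (φ (fg gx)) (φ (fg gy)) (φ (fg gt)) v.1 v.2)}
      hr.kt (fun i n hn => hr.closed i n hn) h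
    rw [← hker, map_cm, map_tc]
    exact this

end Pres


/-! ### From Turing machines to rules -/

section Machine
open Turing

/-- The rule attached to state `q`, scanned digit `a`, left digit `e`, and instruction `o`. -/
def mkRule (m Q c : ℕ) (hm : m ≠ 0) (hQ : Q ≠ 0) (o : Option (ℕ × TM0.Stmt ℕ)) (q a e : ℕ) : Rule :=
  match o with
  | none => ⟨Q * m, m, Q * e + q, a, Q, 1, c, 0, by positivity, hm, hQ, one_ne_zero⟩
  | some (q', TM0.Stmt.write a') =>
    ⟨Q * m, m, Q * e + q, a, Q * m, m, Q * e + q', a', by positivity, hm, by positivity, hm⟩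
  | some (q', TM0.Stmt.move Dir.right) =>
    ⟨Q * m, m, Q * e + q, a, Q * m * m, 1, Q * (m * e + a) + q', 0, by positivity, hm,
      by positivity, one_ne_zero⟩
  | some (q', TM0.Stmt.move Dir.left) =>
    ⟨Q * m, m, Q * e + q, a, Q, m * m, q', m * a + e, by positivity, hm, hQ, by positivity⟩

theorem mkRule_lhs (m Q c : ℕ) (hm : m ≠ 0) (hQ : Q ≠ 0) (o : Option (ℕ × TM0.Stmt ℕ))
    (q a e : ℕ) (k : ℤ × ℤ) :
    (mkRule m Q c hm hQ o q a e).lhs k = (Q * (m * k.1 + e) + q, m * k.2 + a) := by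
  rcases o with _ | ⟨q', (_ | _) | _⟩ <;>
  · simp only [mkRule, Rule.lhs]
    push_cast
    ext <;> simp <;> ring

theorem digit_unique {m : ℕ} {k k' : ℤ} {a a' : ℕ} (ha : a < m) (ha' : a' < m)
    (h : (m : ℤ) * k + a = m * k' + a') : k = k' ∧ a = a' := by
  have hm : (0 : ℤ) < m := by exact_mod_cast (Nat.zero_le _).trans_lt ha
  have e1 : ((m : ℤ) * k + a) % m = a := by
    rw [add_comm, Int.add_mul_emod_self_left]
    exact Int.emod_eq_of_lt (by positivity) (by exact_mod_cast ha)
  have e2 : ((m : ℤ) * k' + a') % m = a' := by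
    rw [add_comm, Int.add_mul_emod_self_left]
    exact Int.emod_eq_of_lt (by positivity) (by exact_mod_cast ha')
  have h1 : (a : ℤ) = a' := by rw [← e1, ← e2, h]
  refine ⟨?_, by exact_mod_cast h1⟩
  rw [h1] at h
  exact mul_left_cancel₀ hm.ne' (add_right_cancel h)

/-- The family of rules of a machine. -/
def rules (m Q c : ℕ) (hm : 1 < m) (hQ : Q ≠ 0) (δ : ℕ → ℕ → Option (ℕ × TM0.Stmt ℕ))
    (i : Fin Q × Fin m × Fin m) : Rule :=
  mkRule m Q c (by omega) hQ (δ i.1 i.2.1) i.1 i.2.1 i.2.2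

/-- One step of the system of rules. -/
def Stp {ι : Type*} (ρ : ι → Rule) (v w : ℤ × ℤ) : Prop := ∃ i k, v = (ρ i).lhs k ∧ w = (ρ i).rhs k

variable {m Q c : ℕ} (hm : 1 < m) (hQ : Q ≠ 0) (hc : c < Q)
  (δ : ℕ → ℕ → Option (ℕ × TM0.Stmt ℕ))

theorem stp_det {v w w' : ℤ × ℤ} (h : Stp (rules m Q c hm hQ δ) v w)
    (h' : Stp (rules m Q c hm hQ δ) v w') : w = w' := by
  obtain ⟨⟨q, a, e⟩, k, h1, rfl⟩ := h
  obtain ⟨⟨q', a', e'⟩, k', h2, rfl⟩ := h'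
  rw [h1] at h2
  simp only [rules, mkRule_lhs, Prod.mk.injEq] at h2
  obtain ⟨h3, h4⟩ := h2
  obtain ⟨h5, h6⟩ := digit_unique q.2 q'.2 h3
  obtain ⟨h7, h8⟩ := digit_unique e.2 e'.2 h5
  obtain ⟨h9, h10⟩ := digit_unique a.2 a'.2 h4
  have hk : k = k' := Prod.ext h7 h9
  have hi : (q, a, e) = (q', a', e') := by simp [Fin.ext_iff, h6, h8, h10]
  rw [hk, hi]

theorem stp_mk {q a e : ℕ} (hq : q < Q) (ha : a < m) (he : e < m) (k : ℤ × ℤ) :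
    Stp (rules m Q c hm hQ δ) (Q * (m * k.1 + e) + q, m * k.2 + a)
      ((mkRule m Q c (by omega) hQ (δ q a) q a e).rhs k) :=
  ⟨(⟨q, hq⟩, ⟨a, ha⟩, ⟨e, he⟩), k, by simp [rules, mkRule_lhs], rfl⟩

/-- Points from which the rules lead to `v₀`. -/
def Good {ι : Type*} (ρ : ι → Rule) (v₀ : ℤ × ℤ) : Set (ℤ × ℤ) :=
  {v | Relation.ReflTransGen (Stp ρ) v v₀}

theorem good_min {ι : Type*} (ρ : ι → Rule) (v₀ : ℤ × ℤ) (C : Set (ℤ × ℤ)) (h0 : v₀ ∈ C)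
    (h : ∀ i k, (ρ i).rhs k ∈ C → (ρ i).lhs k ∈ C) : Good ρ v₀ ⊆ C := by
  intro v hv
  induction hv using Relation.ReflTransGen.head_induction_on with
  | refl => exact h0
  | head h1 _ ih =>
    obtain ⟨i, k, rfl, rfl⟩ := h1
    exact h i k ih

theorem good_iff {ι : Type*} (ρ : ι → Rule) (v₀ : ℤ × ℤ)
    (hdet : ∀ v w w', Stp ρ v w → Stp ρ v w' → w = w') (h0 : Stp ρ v₀ v₀) (i : ι) (k : ℤ × ℤ) :
    (ρ i).lhs k ∈ Good ρ v₀ ↔ (ρ i).rhs k ∈ Good ρ v₀ := by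
  have hs : Stp ρ ((ρ i).lhs k) ((ρ i).rhs k) := ⟨i, k, rfl, rfl⟩
  constructor
  · intro h
    rcases Relation.ReflTransGen.cases_head h with h1 | ⟨w, h1, h2⟩
    · rw [h1] at hs
      rw [← hdet _ _ _ h0 hs]
      exact Relation.ReflTransGen.refl
    · rwa [hdet _ _ _ hs h1]
  · exact fun h => Relation.ReflTransGen.head hs h

include hc in
theorem stp_clean (hδ : ∀ a, δ c a = none) (l r : ℕ) :
    Stp (rules m Q c hm hQ δ) (Q * (l : ℤ) + c, r) (Q * ((l / m : ℕ) : ℤ) + c, ((r / m : ℕ) : ℤ)) := by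
  have := stp_mk hm hQ δ (c := c) hc (Nat.mod_lt r (by omega : m > 0))
    (Nat.mod_lt l (by omega : m > 0)) (((l / m : ℕ) : ℤ), ((r / m : ℕ) : ℤ))
  rw [hδ] at this
  simp only [mkRule, Rule.rhs] at this
  have e1 : ∀ n : ℕ, (m : ℤ) * ((n / m : ℕ) : ℤ) + ((n % m : ℕ) : ℤ) = n := fun n => by
    exact_mod_cast Nat.div_add_mod n m
  rw [e1, e1] at this
  simpa using this

include hc in
theorem clean (hδ : ∀ a, δ c a = none) (n : ℕ) : ∀ l r : ℕ, l + r ≤ n →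
    ((Q * (l : ℤ) + c, (r : ℤ)) : ℤ × ℤ) ∈ Good (rules m Q c hm hQ δ) ((c : ℤ), 0) := by
  induction n with
  | zero =>
    intro l r h
    obtain ⟨rfl, rfl⟩ : l = 0 ∧ r = 0 := by omega
    have : ((c : ℤ), (0 : ℤ)) ∈ Good (rules m Q c hm hQ δ) ((c : ℤ), 0) :=
      Relation.ReflTransGen.refl
    simpa using this
  | succ n ih =>
    intro l r h
    by_cases h0 : l + r = 0
    · exact ih l r (by omega)
    · refine Relation.ReflTransGen.head (stp_clean hm hQ hc δ hδ l r) (ih _ _ ?_)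
      have h1 : l / m ≤ l := Nat.div_le_self _ _
      have h2 : r / m ≤ r := Nat.div_le_self _ _
      rcases Nat.eq_zero_or_pos l with hl | hl
      · have := Nat.div_lt_self (by omega : 0 < r) hm
        omega
      · have := Nat.div_lt_self hl hm
        omega

end Machine

/-! ### Encoding the tape -/

section Enc
open Turing
variable {Γ : Type*} [Inhabited Γ] (m : ℕ) (ga : Γ → ℕ)

/-- Base `m` encoding of a list of symbols. -/
def encL (l : List Γ) : ℕ := l.foldr (fun a n => ga a + m * n) 0

theorem encL_blank (h0 : ga default = 0) (l : List Γ) (n : ℕ) :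
    encL m ga (l ++ List.replicate n default) = encL m ga l := by
  induction l with
  | nil =>
    induction n with
    | zero => rfl
    | succ n ih =>
      simp only [List.nil_append, encL] at ih
      simp [encL, List.replicate_succ, ih, h0]
  | cons a l ih =>
    simp only [encL] at ih
    simp [encL, ih]

/-- The encoding on half tapes. -/
def encB (h0 : ga default = 0) (L : ListBlank Γ) : ℕ :=
  L.liftOn (encL m ga) (by
    rintro a b ⟨n, rfl⟩
    exact (encL_blank m ga h0 a n).symm)

theorem encB_mk (h0 : ga default = 0) (l : List Γ) :
    encB m ga h0 (ListBlank.mk l) = encL m ga l := rfl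

theorem encB_cons (h0 : ga default = 0) (a : Γ) (L : ListBlank Γ) :
    encB m ga h0 (L.cons a) = ga a + m * encB m ga h0 L := by
  induction L using ListBlank.induction_on with
  | h l => rfl

theorem encB_eq (h0 : ga default = 0) (L : ListBlank Γ) :
    encB m ga h0 L = ga L.head + m * encB m ga h0 L.tail := by
  rw [← encB_cons, ListBlank.cons_head_tail]

end Enc

section Sim
open Turing
variable {Γ Λ : Type*} [Inhabited Γ] [Inhabited Λ] (M : TM0.Machine Γ Λ) (S : Set Λ)
  (hS : TM0.Supports M S) (m Q : ℕ) (hm : 1 < m)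
  (ga : Γ → ℕ) (h0 : ga default = 0) (dg : ℕ → Γ) (hdg : ∀ a, dg (ga a) = a) (hga : ∀ a, ga a < m)
  (qs : Λ → ℕ) (dq : ℕ → Option Λ) (hdq : ∀ q ∈ S, dq (qs q) = some q) (hqs : ∀ q ∈ S, qs q < Q)
  (hQ : dq Q = none)

/-- Numerical statement. -/
def numStmt : TM0.Stmt Γ → TM0.Stmt ℕ
  | TM0.Stmt.move d => TM0.Stmt.move d
  | TM0.Stmt.write a => TM0.Stmt.write (ga a)

/-- Numerical transition function. -/
def numM (q a : ℕ) : Option (ℕ × TM0.Stmt ℕ) :=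
  (dq q).bind fun q' => (M q' (dg a)).map fun p => (qs p.1, numStmt ga p.2)

/-- Numerical code of a configuration. -/
def code (C : TM0.Cfg Γ Λ) : ℤ × ℤ :=
  ((Q + 1 : ℕ) * (encB m ga h0 C.Tape.left : ℤ) + qs C.q, (encB m ga h0 C.Tape.right₀ : ℤ))

/-- The rules of a Turing machine. -/
abbrev tmRules := rules m (Q + 1) Q hm (Nat.succ_ne_zero Q) (numM M ga dg qs dq)

include hdg hdq hqs hga in
theorem code_step {C C' : TM0.Cfg Γ Λ} (hC : C.q ∈ S) (h : C' ∈ TM0.step M C) :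
    Stp (tmRules M m Q hm ga dg qs dq) (code m Q ga h0 qs C) (code m Q ga h0 qs C') := by
  obtain ⟨q, T⟩ := C
  obtain ⟨L, R, rfl⟩ := T.exists_mk'
  have key := stp_mk hm (Nat.succ_ne_zero Q) (numM M ga dg qs dq) (c := Q)
    (Nat.lt_succ_of_lt (hqs q hC)) (hga R.head) (hga L.head)
    ((encB m ga h0 L.tail : ℤ), (encB m ga h0 R.tail : ℤ))
  obtain ⟨⟨q', s⟩, h1, rfl⟩ := Option.map_eq_some_iff.1 h
  simp only [Tape.mk'_head] at h1
  have h2 : numM M ga dg qs dq (qs q) (ga R.head) = some (qs q', numStmt ga s) := by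
    simp [numM, hdq q hC, hdg, h1]
  rw [h2] at key
  have hl : code m Q ga h0 qs ⟨q, Tape.mk' L R⟩ =
      ((Q + 1 : ℕ) * ((m : ℤ) * (encB m ga h0 L.tail : ℤ) + (ga L.head : ℕ)) + (qs q : ℕ),
        (m : ℤ) * (encB m ga h0 R.tail : ℤ) + (ga R.head : ℕ)) := by
    simp only [code, Tape.mk'_left, Tape.mk'_right₀]
    rw [encB_eq m ga h0 L, encB_eq m ga h0 R]
    push_cast
    refine Prod.ext ?_ ?_ <;> push_cast <;> ring
  rw [hl]
  convert key using 1
  rcases s with (_ | _) | a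
  · simp only [Tape.move_left_mk', code, Tape.mk'_left, Tape.mk'_right₀, numStmt, mkRule, Rule.rhs,
      encB_cons]
    rw [encB_eq m ga h0 R]
    push_cast
    refine Prod.ext ?_ ?_ <;> push_cast <;> ring
  · simp only [Tape.move_right_mk', code, Tape.mk'_left, Tape.mk'_right₀, numStmt, mkRule, Rule.rhs,
      encB_cons]
    rw [encB_eq m ga h0 L]
    push_cast
    refine Prod.ext ?_ ?_ <;> push_cast <;> ring
  · simp only [Tape.write_mk', code, Tape.mk'_left, Tape.mk'_right₀, numStmt, mkRule, Rule.rhs,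
      encB_cons]
    rw [encB_eq m ga h0 L]
    push_cast
    refine Prod.ext ?_ ?_ <;> push_cast <;> ring

include hdg hdq hqs hga in
theorem code_halt {C : TM0.Cfg Γ Λ} (hC : C.q ∈ S) (h : TM0.step M C = none) :
    ∃ l r : ℕ, Stp (tmRules M m Q hm ga dg qs dq) (code m Q ga h0 qs C)
      ((Q + 1 : ℕ) * (l : ℤ) + Q, (r : ℤ)) := by
  obtain ⟨q, T⟩ := C
  obtain ⟨L, R, rfl⟩ := T.exists_mk'
  refine ⟨encB m ga h0 L.tail, encB m ga h0 R.tail, ?_⟩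
  have key := stp_mk hm (Nat.succ_ne_zero Q) (numM M ga dg qs dq) (c := Q)
    (Nat.lt_succ_of_lt (hqs q hC)) (hga R.head) (hga L.head)
    ((encB m ga h0 L.tail : ℤ), (encB m ga h0 R.tail : ℤ))
  have h1 : M q R.head = none := by
    simpa [TM0.step] using h
  have h2 : numM M ga dg qs dq (qs q) (ga R.head) = none := by
    simp [numM, hdq q hC, hdg, h1]
  rw [h2] at key
  have hl : code m Q ga h0 qs ⟨q, Tape.mk' L R⟩ =
      ((Q + 1 : ℕ) * ((m : ℤ) * (encB m ga h0 L.tail : ℤ) + (ga L.head : ℕ)) + (qs q : ℕ),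
        (m : ℤ) * (encB m ga h0 R.tail : ℤ) + (ga R.head : ℕ)) := by
    simp only [code, Tape.mk'_left, Tape.mk'_right₀]
    rw [encB_eq m ga h0 L, encB_eq m ga h0 R]
    push_cast
    refine Prod.ext ?_ ?_ <;> push_cast <;> ring
  rw [hl]
  simpa [mkRule, Rule.rhs] using key

include hS hdg hdq hqs hga hQ in
theorem code_good (C : TM0.Cfg Γ Λ) (hC : C.q ∈ S) :
    code m Q ga h0 qs C ∈ Good (tmRules M m Q hm ga dg qs dq) ((Q : ℤ), 0) ↔
      (StateTransition.eval (TM0.step M) C).Dom := by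
  have hδ : ∀ a, numM M ga dg qs dq Q a = none := fun a => by simp [numM, hQ]
  constructor
  · intro h
    generalize hv : code m Q ga h0 qs C = v at h
    induction h using Relation.ReflTransGen.head_induction_on generalizing C with
    | refl =>
      exfalso
      simp only [code, Prod.mk.injEq] at hv
      have := (digit_unique (m := Q + 1) (k' := 0) (Nat.lt_succ_of_lt (hqs _ hC))
        (Nat.lt_succ_self Q) (by simpa using hv.1)).2
      exact (hqs _ hC).ne this
    | head h1 _ ih =>
      subst hv
      rcases hst : TM0.step M C with _ | C'
      · exact Part.dom_iff_mem.2 ⟨C, StateTransition.mem_eval.2 ⟨Relation.ReflTransGen.refl, hst⟩⟩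
      · have h2 := code_step M S m Q hm ga h0 dg hdg hga qs dq hdq hqs hC hst
        have h3 := stp_det _ _ _ h1 h2
        have h4 := ih C' (TM0.step_supports M hS hst hC) h3.symm
        rwa [StateTransition.reaches_eval (Relation.ReflTransGen.single hst)]
  · intro h
    obtain ⟨b, hb⟩ := Part.dom_iff_mem.1 h
    obtain ⟨h1, h2⟩ := StateTransition.mem_eval.1 hb
    clear h hb
    revert hC
    induction h1 using Relation.ReflTransGen.head_induction_on with
    | refl =>
      intro hC
      obtain ⟨l, r, h3⟩ := code_halt M S m Q hm ga h0 dg hdg hga qs dq hdq hqs hC h2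
      exact Relation.ReflTransGen.head h3 (clean hm (Nat.succ_ne_zero Q) (Nat.lt_succ_self Q) _ hδ _ l r le_rfl)
    | head h3 _ ih =>
      intro hC
      exact Relation.ReflTransGen.head
        (code_step M S m Q hm ga h0 dg hdg hga qs dq hdq hqs hC h3)
        (ih (TM0.step_supports M hS h3 hC))

end Sim

theorem good_reindex {ι κ : Type*} (e : κ ≃ ι) (ρ : ι → Rule) (v₀ : ℤ × ℤ) :
    Good (ρ ∘ e) v₀ = Good ρ v₀ := by
  have : Stp (ρ ∘ e) = Stp ρ := by
    funext v w
    apply propext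
    constructor
    · rintro ⟨i, k, h⟩
      exact ⟨e i, k, h⟩
    · rintro ⟨i, k, h⟩
      exact ⟨e.symm i, k, by simpa using h⟩
  simp [Good, this]

theorem machine_group {Γ Λ : Type*} [Inhabited Γ] [Finite Γ] [Inhabited Λ]
    (M : Turing.TM0.Machine Γ Λ) (S : Finset Λ) (hS : Turing.TM0.Supports M (S : Set Λ)) :
    ∃ (N : ℕ) (R : Finset (FreeGroup (Fin (4 + N)))) (p m : ℕ) (ga : Γ → ℕ), ∀ l : List Γ,
      cm (fg gk) (tc (fg gx) (fg gy) (fg gt) (p : ℤ) (encL m ga l : ℤ)) ∈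
        Subgroup.normalClosure (R : Set (FreeGroup (Fin (4 + N)))) ↔
      (Turing.TM0.eval M l).Dom := by
  classical
  obtain ⟨n, ⟨e⟩⟩ := Finite.exists_equiv_fin Γ
  let z : Fin n := e default
  let z0 : Fin n := ⟨0, (Nat.zero_le _).trans_lt z.2⟩
  let e' : Γ ≃ Fin n := e.trans (Equiv.swap z z0)
  let ga : Γ → ℕ := fun a => e' a
  have h0 : ga default = 0 := by simp [ga, e', z, z0]
  let dg : ℕ → Γ := fun k => if h : k < n then e'.symm ⟨k, h⟩ else default
  have hdg : ∀ a, dg (ga a) = a := fun a => by simp [dg, ga]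
  have hga : ∀ a, ga a < n + 1 := fun a => (e' a).2.trans (Nat.lt_succ_self _)
  let Q := S.card
  let es := S.equivFin
  let qs : Λ → ℕ := fun q => if h : q ∈ S then es ⟨q, h⟩ else 0
  let dq : ℕ → Option Λ := fun k => if h : k < Q then some (es.symm ⟨k, h⟩) else none
  have hqs : ∀ q ∈ (S : Set Λ), qs q < Q := fun q hq => by
    have hq' : q ∈ S := hq
    simp [qs, hq', Q]
  have hdq : ∀ q ∈ (S : Set Λ), dq (qs q) = some q := fun q hq => by
    have hq' : q ∈ S := hq
    have := hqs q hq
    simp [dq, this]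
    simp [qs, hq']
  have hQ : dq Q = none := by simp [dq]
  have hm : 1 < n + 1 := by have := z.2; omega
  let ρ := tmRules M (n + 1) Q hm ga dg qs dq
  let N := Fintype.card (Fin (Q + 1) × Fin (n + 1) × Fin (n + 1))
  let ei : Fin N ≃ Fin (Q + 1) × Fin (n + 1) × Fin (n + 1) := (Fintype.equivFin _).symm
  have hgood : ∀ i k, (ρ i).lhs k ∈ Good ρ ((Q : ℤ), 0) ↔ (ρ i).rhs k ∈ Good ρ ((Q : ℤ), 0) := by
    refine good_iff ρ _ (fun v w w' => stp_det _ _ _) ?_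
    have := stp_clean hm (Nat.succ_ne_zero Q) (Nat.lt_succ_self Q) (numM M ga dg qs dq)
      (fun a => by simp [numM, hQ]) 0 0
    simpa using this
  refine ⟨N, relators (ρ ∘ ei) ((Q : ℤ), 0), qs default, n + 1, ga, fun l => ?_⟩
  have h1 := pres_iff (ρ ∘ ei) ((Q : ℤ), 0) (Good ρ ((Q : ℤ), 0)) Relation.ReflTransGen.refl
    (fun i k => hgood (ei i) k)
    (fun C hC h => by rw [← good_reindex ei]; exact good_min _ _ C hC h)
    ((qs default : ℤ), (encL (n + 1) ga l : ℤ))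
  rw [h1]
  have h2 := code_good M S hS (n + 1) Q hm ga h0 dg hdg hga qs dq hdq hqs hQ
    (Turing.TM0.init l) hS.1
  have h3 : code (n + 1) Q ga h0 qs (Turing.TM0.init l) =
      ((qs default : ℤ), (encL (n + 1) ga l : ℤ)) := by
    simp only [code, Turing.TM0.init, Turing.Tape.mk₁, Turing.Tape.mk₂, Turing.Tape.mk'_left,
      Turing.Tape.mk'_right₀, encB_mk]
    simp [encL]
  rw [h3] at h2
  rw [h2]
  rfl

/-! ### A Turing machine with undecidable halting problem -/

section Universal
open Turing Turing.PartrecToTM2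

/-- The binary digits as symbols. -/
def bitSym (b : Bool) : Γ' := cond b Γ'.bit1 Γ'.bit0

theorem trPosNum_bits (p : PosNum) : trPosNum p = (p : ℕ).bits.map bitSym := by
  induction p with
  | one => simp [trPosNum, bitSym]
  | bit0 p ih =>
    have h : ((PosNum.bit0 p : PosNum) : ℕ) = 2 * (p : ℕ) := by
      rw [PosNum.cast_bit0]; ring
    rw [h, Nat.bit0_bits _ (PosNum.cast_pos (α := ℕ) p).ne']
    simp [trPosNum, ih, bitSym]
  | bit1 p ih =>
    have h : ((PosNum.bit1 p : PosNum) : ℕ) = 2 * (p : ℕ) + 1 := by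
      rw [PosNum.cast_bit1]; ring
    rw [h, Nat.bit1_bits]
    simp [trPosNum, ih, bitSym]

theorem trNat_bits (n : ℕ) : trNat n = n.bits.map bitSym := by
  have h : ((n : Num) : ℕ) = n := Num.to_of_nat n
  rw [trNat]
  generalize (n : Num) = u at h
  subst h
  cases u with
  | zero => simp [trNum]
  | pos p => exact trPosNum_bits p

theorem bits_rec (n : ℕ) (h : n ≠ 0) : n.bits = decide (n % 2 = 1) :: (n / 2).bits := by
  have h2 := Nat.div_add_mod n 2
  rcases Nat.mod_two_eq_zero_or_one n with h1 | h1
  · rw [h1] at h2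
    conv_lhs => rw [← h2, Nat.add_zero, Nat.bit0_bits _ (by omega)]
    simp [h1]
  · rw [h1] at h2
    conv_lhs => rw [← h2, Nat.bit1_bits]
    simp [h1]

theorem primrec_bits : Primrec Nat.bits := by
  have h : Primrec₂ (fun (_ : Unit) (n : ℕ) => n.bits) := by
    refine Primrec.nat_strong_rec (g := fun (_ : Unit) (l : List (List Bool)) =>
      if l.length = 0 then some [] else
        (l[l.length / 2]?).map (fun t => decide (l.length % 2 = 1) :: t)) _ ?_ ?_
    · refine Primrec.ite ?_ (Primrec.const _) ?_
      · exact Primrec.eq.comp (Primrec.list_length.comp Primrec.snd) (Primrec.const 0)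
      · refine Primrec.option_map ?_ ?_
        · exact Primrec.list_getElem?.comp Primrec.snd (Primrec.nat_div.comp
            (Primrec.list_length.comp Primrec.snd) (Primrec.const 2))
        · refine Primrec.list_cons.comp ?_ Primrec.snd
          have : PrimrecPred (fun p : (Unit × List (List Bool)) × List Bool =>
              p.1.2.length % 2 = 1) :=
            Primrec.eq.comp (Primrec.nat_mod.comp (Primrec.list_length.comp
              (Primrec.snd.comp Primrec.fst)) (Primrec.const 2)) (Primrec.const 1)
          exact this.decide
    · intro _ n
      by_cases hn : n = 0
      · subst hn; simp
      · have h2 : n / 2 < n := by omega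
        simp [hn, h2, ← bits_rec n hn]
  exact h.comp (Primrec.const ()) Primrec.id

instance : Finite K' :=
  Finite.of_surjective (fun i : Fin 4 => ![K'.main, K'.rev, K'.aux, K'.stack] i) (by
    rintro (_ | _ | _ | _)
    · exact ⟨0, rfl⟩
    · exact ⟨1, rfl⟩
    · exact ⟨2, rfl⟩
    · exact ⟨3, rfl⟩)

instance : Finite (TM2to1.Γ' K' (fun _ => Γ')) :=
  inferInstanceAs (Finite (Bool × (K' → Option Γ')))

/-- Symbol of the tape alphabet carrying a symbol on the main stack. -/
def mainSym (b : Bool) (a : Γ') : TM2to1.Γ' K' (fun _ => Γ') :=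
  (b, Function.update (fun _ => none) K'.main (some a))

theorem trInit_eq (n : ℕ) : TM2to1.trInit (Γ := fun _ : K' => Γ') K'.main (trList [n]) =
    mainSym true Γ'.cons :: n.bits.reverse.map (fun b => mainSym false (bitSym b)) := by
  have h : (trList [n]).reverse = Γ'.cons :: n.bits.reverse.map bitSym := by
    simp [trNat_bits]
  rw [TM2to1.trInit, h]
  exact congrArg (List.cons (mainSym true Γ'.cons))
    (List.map_map (g := mainSym false) (f := bitSym) (l := n.bits.reverse))

/-- The number encoding the initial tape. -/
def inNum (m A B0 B1 : ℕ) (n : ℕ) : ℕ :=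
  A + m * n.bits.reverse.foldr (fun b s => cond b B1 B0 + m * s) 0

theorem encL_trInit (m : ℕ) (ga : TM2to1.Γ' K' (fun _ => Γ') → ℕ) (n : ℕ) :
    encL m ga (TM2to1.trInit (Γ := fun _ : K' => Γ') K'.main (trList [n])) =
      inNum m (ga (mainSym true Γ'.cons)) (ga (mainSym false Γ'.bit0)) (ga (mainSym false Γ'.bit1))
        n := by
  rw [trInit_eq, encL, List.foldr_cons, List.foldr_map, inNum]
  congr 3
  funext b s
  cases b <;> rfl

theorem primrec_inNum (m A B0 B1 : ℕ) : Primrec (inNum m A B0 B1) := by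
  have h : Primrec (fun n : ℕ => n.bits.reverse.foldr (fun b s => cond b B1 B0 + m * s) 0) := by
    refine Primrec.list_foldr (h := fun _ p => cond p.1 B1 B0 + m * p.2)
      (Primrec.list_reverse.comp primrec_bits) (Primrec.const 0) ?_
    exact Primrec.nat_add.comp
      (Primrec.cond (Primrec.fst.comp Primrec.snd) (Primrec.const B1) (Primrec.const B0))
      (Primrec.nat_mul.comp (Primrec.const m) (Primrec.snd.comp Primrec.snd))
  exact Primrec.nat_add.comp (Primrec.const A) (Primrec.nat_mul.comp (Primrec.const m) h)

theorem exists_machine : ∃ (Λ : Type) (_ : Inhabited Λ)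
    (M : TM0.Machine (TM2to1.Γ' K' (fun _ => Γ')) Λ) (S : Finset Λ),
    TM0.Supports M (S : Set Λ) ∧ ∀ n : ℕ,
      (TM0.eval M (TM2to1.trInit (Γ := fun _ : K' => Γ') K'.main (trList [n]))).Dom ↔
        (Nat.Partrec.Code.eval (Denumerable.ofNat Nat.Partrec.Code n) 0).Dom := by
  have hp : Partrec (fun n : ℕ => Nat.Partrec.Code.eval (Denumerable.ofNat Nat.Partrec.Code n) 0) :=
    Nat.Partrec.Code.eval_part.comp (Computable.ofNat _) (Computable.const 0)
  obtain ⟨c, hc⟩ := ToPartrec.Code.exists_code (Nat.Partrec'.part_iff₁.2 hp)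
  let _ : Inhabited Λ' := ⟨trNormal c Cont'.halt⟩
  refine ⟨TM1to0.Λ' (TM2to1.tr PartrecToTM2.tr), inferInstance,
    TM1to0.tr (TM2to1.tr PartrecToTM2.tr), TM1to0.trStmts _ (TM2to1.trSupp PartrecToTM2.tr
      (codeSupp c Cont'.halt)), TM1to0.tr_supports _ (TM2to1.tr_supports _
        (PartrecToTM2.tr_supports c Cont'.halt)), fun n => ?_⟩
  rw [TM1to0.tr_eval]
  refine (TM2to1.tr_eval_dom PartrecToTM2.tr K'.main (trList [n])).trans ?_
  have h1 := hc ⟨[n], rfl⟩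
  have h2 := PartrecToTM2.tr_eval c [n]
  have h3 : (TM2.init K'.main (trList [n]) : Cfg') = PartrecToTM2.init c [n] := by
    simp only [TM2.init, PartrecToTM2.init]
    congr 1
    funext k
    cases k <;> rfl
  have h4 : (TM2.eval PartrecToTM2.tr K'.main (trList [n])).Dom ↔
      (StateTransition.eval (TM2.step PartrecToTM2.tr) (PartrecToTM2.init c [n])).Dom := by
    rw [← h3]; rfl
  rw [h4, h2]
  change (ToPartrec.Code.eval c [n]).Dom ↔ _
  have h5 : ToPartrec.Code.eval c [n] = _ := h1
  rw [h5]
  rfl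

end Universal

/-! ### Words -/

section Words
variable {α : Type*}

theorem mk_replicate (a : α) (n : ℕ) :
    FreeGroup.mk (List.replicate n (a, true)) = FreeGroup.of a ^ n := by
  induction n with
  | zero => rfl
  | succ n ih =>
    rw [List.replicate_succ, pow_succ', ← ih, FreeGroup.of, FreeGroup.mul_mk]
    rfl

theorem mk_replicate_inv (a : α) (n : ℕ) :
    FreeGroup.mk (List.replicate n (a, false)) = (FreeGroup.of a ^ n)⁻¹ := by
  rw [← mk_replicate, FreeGroup.inv_mk]
  simp [FreeGroup.invRev]

/-- The word of `t(p,q)` or its inverse. -/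
def tw (x y t : α) (s : Bool) (p q : ℕ) : List (α × Bool) :=
  List.replicate p (x, false) ++ (List.replicate q (y, false) ++ ((t, s) ::
    (List.replicate q (y, true) ++ List.replicate p (x, true))))

theorem mk_tw (x y t : α) (s : Bool) (p q : ℕ) : FreeGroup.mk (tw x y t s p q) =
    tc (FreeGroup.of x) (FreeGroup.of y) (FreeGroup.mk [(t, s)]) (p : ℤ) (q : ℤ) := by
  rw [tw, ← List.singleton_append (x := (t, s)), ← FreeGroup.mul_mk, ← FreeGroup.mul_mk,
    ← FreeGroup.mul_mk, ← FreeGroup.mul_mk, mk_replicate, mk_replicate, mk_replicate_inv,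
    mk_replicate_inv]
  simp [tc, mul_assoc]

/-- The word of the commutator of `k` and `t(p,q)`. -/
def cw (x y t k : α) (p q : ℕ) : List (α × Bool) :=
  (k, true) :: (tw x y t true p q ++ ((k, false) :: tw x y t false p q))

theorem mk_cw (x y t k : α) (p q : ℕ) : FreeGroup.mk (cw x y t k p q) =
    cm (FreeGroup.of k) (tc (FreeGroup.of x) (FreeGroup.of y) (FreeGroup.of t) (p : ℤ) (q : ℤ)) := by
  rw [cw, ← List.singleton_append (x := (k, true)), ← List.singleton_append (x := (k, false)),
    ← FreeGroup.mul_mk, ← FreeGroup.mul_mk, ← FreeGroup.mul_mk, mk_tw, mk_tw]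
  have h1 : FreeGroup.mk [(k, false)] = (FreeGroup.of k)⁻¹ := rfl
  have h2 : FreeGroup.mk [(t, false)] = (FreeGroup.of t)⁻¹ := rfl
  have h3 : FreeGroup.mk [(k, true)] = FreeGroup.of k := rfl
  have h4 : FreeGroup.mk [(t, true)] = FreeGroup.of t := rfl
  rw [h1, h2, h3, h4]
  simp [cm, tc, mul_assoc]

theorem primrec_replicate [Primcodable α] (a : α) : Primrec (fun n : ℕ => List.replicate n a) :=
  (Primrec.list_map Primrec.list_range (Primrec.const a).to₂).of_eq fun n => by
    simp

theorem primrec_cw [Primcodable α] (x y t k : α) (p : ℕ) : Primrec (cw x y t k p) := by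
  have h : ∀ s, Primrec (tw x y t s p) := fun s =>
    Primrec.list_append.comp (Primrec.const _) (Primrec.list_append.comp (primrec_replicate _)
      (Primrec.list_cons.comp (Primrec.const _)
        (Primrec.list_append.comp (primrec_replicate _) (Primrec.const _))))
  exact Primrec.list_cons.comp (Primrec.const _) (Primrec.list_append.comp (h true)
    (Primrec.list_cons.comp (Primrec.const _) (h false)))

end Words

end NB

theorem novikov_boone :
    ∃ (n : ℕ) (R : Finset (FreeGroup (Fin n))),
      ¬ ComputablePred (fun w : List (Fin n × Bool) =>
          FreeGroup.mk w ∈ Subgroup.normalClosure (R : Set (FreeGroup (Fin n)))) := by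
  obtain ⟨Λ, _, M, S, hS, hM⟩ := NB.exists_machine
  obtain ⟨N, R, p, m, ga, h⟩ := NB.machine_group M S hS
  refine ⟨4 + N, R, fun hc => ComputablePred.halting_problem 0 ?_⟩
  refine ComputablePred.computable_of_manyOneReducible ⟨fun c => NB.cw NB.gx NB.gy NB.gt NB.gk p
    (NB.inNum m (ga (NB.mainSym true Turing.PartrecToTM2.Γ'.cons))
      (ga (NB.mainSym false Turing.PartrecToTM2.Γ'.bit0))
      (ga (NB.mainSym false Turing.PartrecToTM2.Γ'.bit1)) (Encodable.encode c)), ?_, fun c => ?_⟩ hc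
  · exact ((NB.primrec_cw _ _ _ _ p).comp ((NB.primrec_inNum _ _ _ _).comp Primrec.encode)).to_comp
  · rw [NB.mk_cw, ← NB.encL_trInit]
    refine Iff.trans ?_ (h _).symm
    rw [hM]
    simp
end

section
/- Kuznetsov's theorem: Let n be a natural number and R a finite set of elements of FreeGroup (Fin n). If the presented group G = ⟨Fin n ∣ R⟩ (the quotient of FreeGroup (Fin n) by the normal closure of R) is a simple group, then membership in the normal closure of R is a computable predicate; that is, every finitely presented simple group has solvable word problem. -/
namespace Kuz

variable {n : ℕ}

abbrev W (n : ℕ) := List (Fin n × Bool)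

theorem re_exists {α β : Type*} [Primcodable α] [Primcodable β] {p : α → β → Bool}
    (hp : Computable₂ p) : REPred (fun a => ∃ b, p a b = true) := by
  have h : Computable₂ (fun (a : α) (k : ℕ) =>
      (Encodable.decode (α := β) k).bind (fun b => bif p a b then some () else none)) := by
    refine Computable.option_bind (Computable.decode.comp Computable.snd) ?_
    refine Computable.cond ?_ (Computable.const _) (Computable.const _)
    exact hp.comp (Computable.fst.comp Computable.fst) Computable.snd
  have h2 := (Partrec.rfindOpt h).dom_re
  refine h2.of_eq fun a => ?_
  rw [Nat.rfindOpt_dom]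
  constructor
  · rintro ⟨k, u, hu⟩
    simp only [Option.mem_def, Option.bind_eq_some_iff] at hu
    obtain ⟨b, -, hb⟩ := hu
    refine ⟨b, ?_⟩
    cases hpb : p a b <;> simp [hpb] at hb ⊢
  · rintro ⟨b, hb⟩
    exact ⟨Encodable.encode b, (), by simp [hb]⟩

theorem re_comp {α β : Type*} [Primcodable α] [Primcodable β] {p : β → Prop}
    (hp : REPred p) {f : α → β} (hf : Computable f) : REPred (fun a => p (f a)) :=
  Partrec.comp (f := fun b => Part.assert (p b) fun _ => Part.some ()) hp hf

theorem primrec_invRev : Primrec (FreeGroup.invRev : W n → W n) := by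
  unfold FreeGroup.invRev
  refine Primrec.list_reverse.comp (Primrec.list_map Primrec.id ?_)
  exact Primrec.pair (Primrec.fst.comp Primrec.snd)
    (Primrec.not.comp (Primrec.snd.comp Primrec.snd))

def step (x : Fin n × Bool) (l : W n) : W n :=
  List.casesOn l [x] (fun hd tl => if x.1 = hd.1 ∧ x.2 = !hd.2 then tl else x :: hd :: tl)

theorem reduce_eq (l : W n) : FreeGroup.reduce l = l.foldr step [] := by
  induction l with
  | nil => rfl
  | cons a l ih => rw [FreeGroup.reduce.cons, ih]; rfl

theorem primrec_step : Primrec₂ (step : Fin n × Bool → W n → W n) := by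
  unfold step
  refine Primrec.list_casesOn (f := fun p : (Fin n × Bool) × W n => p.2)
    (g := fun p => [p.1])
    (h := fun p q => if p.1.1 = q.1.1 ∧ p.1.2 = !q.1.2 then q.2 else p.1 :: q.1 :: q.2)
    Primrec.snd ?_ ?_
  · exact Primrec.list_cons.comp Primrec.fst (Primrec.const _)
  · have hx : Primrec (fun z : ((Fin n × Bool) × W n) × ((Fin n × Bool) × W n) => z.1.1) :=
      Primrec.fst.comp Primrec.fst
    have hh : Primrec (fun z : ((Fin n × Bool) × W n) × ((Fin n × Bool) × W n) => z.2.1) :=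
      Primrec.fst.comp Primrec.snd
    have ht : Primrec (fun z : ((Fin n × Bool) × W n) × ((Fin n × Bool) × W n) => z.2.2) :=
      Primrec.snd.comp Primrec.snd
    refine Primrec.ite (PrimrecPred.and ?_ ?_) ht
      (Primrec.list_cons.comp hx (Primrec.list_cons.comp hh ht))
    · exact Primrec.eq.comp (Primrec.fst.comp hx) (Primrec.fst.comp hh)
    · exact Primrec.eq.comp (Primrec.snd.comp hx) (Primrec.not.comp (Primrec.snd.comp hh))

theorem primrec_reduce : Primrec (FreeGroup.reduce : W n → W n) := by
  refine (Primrec.list_foldr (f := fun l : W n => l) (g := fun _ => ([] : W n))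
    (h := fun _ p => step p.1 p.2) Primrec.id (Primrec.const _) ?_).of_eq
    fun l => (reduce_eq l).symm
  exact primrec_step.comp (Primrec.fst.comp Primrec.snd) (Primrec.snd.comp Primrec.snd)

/-- The relator number `i` in the list `w :: rs`. -/
def rel (rs : List (W n)) (w : W n) (i : ℕ) : W n := (w :: rs).getD i []

def block (rs : List (W n)) (w : W n) (t : W n × ℕ × Bool) : W n :=
  t.1 ++ ((bif t.2.2 then rel rs w t.2.1 else FreeGroup.invRev (rel rs w t.2.1)) ++
    FreeGroup.invRev t.1)

def P (rs : List (W n)) (w : W n) (c : List (W n × ℕ × Bool)) : W n := c.flatMap (block rs w)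

theorem primrec_P (rs : List (W n)) : Primrec₂ (P rs) := by
  unfold P
  refine Primrec.list_flatMap Primrec.snd ?_
  have hw : Primrec (fun z : (W n × List (W n × ℕ × Bool)) × (W n × ℕ × Bool) => z.1.1) :=
    Primrec.fst.comp Primrec.fst
  have hg : Primrec (fun z : (W n × List (W n × ℕ × Bool)) × (W n × ℕ × Bool) => z.2.1) :=
    Primrec.fst.comp Primrec.snd
  have hi : Primrec (fun z : (W n × List (W n × ℕ × Bool)) × (W n × ℕ × Bool) => z.2.2.1) :=
    Primrec.fst.comp (Primrec.snd.comp Primrec.snd)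
  have hb : Primrec (fun z : (W n × List (W n × ℕ × Bool)) × (W n × ℕ × Bool) => z.2.2.2) :=
    Primrec.snd.comp (Primrec.snd.comp Primrec.snd)
  have hr : Primrec (fun z : (W n × List (W n × ℕ × Bool)) × (W n × ℕ × Bool) =>
      rel rs z.1.1 z.2.2.1) :=
    (Primrec.list_getD []).comp (Primrec.list_cons.comp hw (Primrec.const rs)) hi
  exact Primrec.list_append.comp hg (Primrec.list_append.comp
    (Primrec.cond hb hr (primrec_invRev.comp hr)) (primrec_invRev.comp hg))

theorem re_Q (rs : List (W n)) :
    REPred (fun p : W n × W n => ∃ c, FreeGroup.mk (P rs p.1 c) = FreeGroup.mk p.2) := by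
  have : Primrec₂ (fun (p : W n × W n) (c : List (W n × ℕ × Bool)) =>
      decide (FreeGroup.reduce (P rs p.1 c) = FreeGroup.reduce p.2)) :=
    PrimrecPred.decide (Primrec.eq.comp
      (primrec_reduce.comp ((primrec_P rs).comp (Primrec.fst.comp Primrec.fst) Primrec.snd))
      (primrec_reduce.comp (Primrec.snd.comp Primrec.fst)))
  refine (re_exists this.to_comp).of_eq fun p => exists_congr fun c => ?_
  rw [decide_eq_true_iff]
  constructor
  · exact fun h => FreeGroup.reduce.exact h
  · exact fun h => by simpa only [FreeGroup.toWord_mk] using congrArg FreeGroup.toWord h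

theorem mk_block (rs : List (W n)) (w : W n) (t : W n × ℕ × Bool) :
    FreeGroup.mk (block rs w t) = FreeGroup.mk t.1 *
      (bif t.2.2 then FreeGroup.mk (rel rs w t.2.1) else (FreeGroup.mk (rel rs w t.2.1))⁻¹) *
      (FreeGroup.mk t.1)⁻¹ := by
  obtain ⟨g, i, b⟩ := t
  cases b <;> simp [block, ← FreeGroup.mul_mk, ← FreeGroup.inv_mk, mul_assoc]

theorem mk_P_cons (rs : List (W n)) (w : W n) (t) (c) :
    FreeGroup.mk (P rs w (t :: c)) = FreeGroup.mk (block rs w t) * FreeGroup.mk (P rs w c) := by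
  simp [P, FreeGroup.mul_mk]

theorem mem_iff (rs : List (W n)) (w : W n) (x : FreeGroup (Fin n)) :
    (∃ c, FreeGroup.mk (P rs w c) = x) ↔
      x ∈ Subgroup.normalClosure {y | ∃ r ∈ w :: rs, FreeGroup.mk r = y} := by
  constructor
  · rintro ⟨c, rfl⟩
    induction c with
    | nil => exact one_mem _
    | cons t c ih =>
      rw [mk_P_cons, mk_block]
      refine mul_mem (Subgroup.normalClosure_normal.conj_mem _ ?_ _) ih
      have h : FreeGroup.mk (rel rs w t.2.1) ∈
          Subgroup.normalClosure {y | ∃ r ∈ w :: rs, FreeGroup.mk r = y} := by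
        by_cases hi : t.2.1 < (w :: rs).length
        · refine Subgroup.subset_normalClosure ⟨_, ?_, rfl⟩
          rw [rel, List.getD_eq_getElem _ _ hi]
          exact List.getElem_mem hi
        · rw [rel, List.getD_eq_default _ _ (not_lt.mp hi)]
          exact one_mem _
      cases t.2.2
      · exact inv_mem h
      · exact h
  · intro hx
    obtain ⟨l, hl, rfl⟩ := Submonoid.exists_list_of_mem_closure
      (s := Group.conjugatesOfSet {y | ∃ r ∈ w :: rs, FreeGroup.mk r = y} ∪
        (Group.conjugatesOfSet {y | ∃ r ∈ w :: rs, FreeGroup.mk r = y})⁻¹) (x := x) (by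
          rw [← Subgroup.closure_toSubmonoid]; exact hx)
    clear hx
    induction l with
    | nil => exact ⟨[], rfl⟩
    | cons y l ih =>
      obtain ⟨c, hc⟩ := ih fun z hz => hl z (List.mem_cons_of_mem _ hz)
      have key : ∀ z, z ∈ Group.conjugatesOfSet {y | ∃ r ∈ w :: rs, FreeGroup.mk r = y} →
          ∃ (g : W n) (i : ℕ), FreeGroup.mk g * FreeGroup.mk (rel rs w i) *
            (FreeGroup.mk g)⁻¹ = z := by
        intro z hz
        obtain ⟨a, ⟨r, hr, rfl⟩, ha⟩ := Group.mem_conjugatesOfSet_iff.mp hz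
        obtain ⟨g, rfl⟩ := isConj_iff.mp ha
        obtain ⟨i, hi, rfl⟩ := List.getElem_of_mem hr
        refine ⟨g.toWord, i, ?_⟩
        rw [FreeGroup.mk_toWord, rel, List.getD_eq_getElem _ _ hi]
      rcases hl y List.mem_cons_self with h | h
      · obtain ⟨g, i, h⟩ := key _ h
        refine ⟨(g, i, true) :: c, ?_⟩
        rw [mk_P_cons, mk_block, hc, List.prod_cons, ← h]
        rfl
      · obtain ⟨g, i, h⟩ := key _ h
        refine ⟨(g, i, false) :: c, ?_⟩
        rw [mk_P_cons, mk_block, hc, List.prod_cons, ← inv_inv y, ← h]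
        simp [mul_assoc]

end Kuz

/-!
Kuznetsov (1958): every finitely presented simple group has solvable word
problem.  Elements of the free group are effectively encoded by the words
(lists of generators and formal inverses) representing them; a word `w`
represents the identity of the presented group `⟨Fin n ∣ R⟩` exactly when
`FreeGroup.mk w` lies in the normal closure of `R`.
-/
theorem kuznetsov (n : ℕ) (R : Finset (FreeGroup (Fin n)))
    (hsimple : IsSimpleGroup
      (FreeGroup (Fin n) ⧸ Subgroup.normalClosure (R : Set (FreeGroup (Fin n))))) :
    ComputablePred (fun w : List (Fin n × Bool) =>
      FreeGroup.mk w ∈ Subgroup.normalClosure (R : Set (FreeGroup (Fin n)))) := by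
  classical
  set N := Subgroup.normalClosure (R : Set (FreeGroup (Fin n))) with hN
  let rs : List (Kuz.W n) := R.toList.map FreeGroup.toWord
  have hset : ∀ w : Kuz.W n, {y | ∃ r ∈ w :: rs, FreeGroup.mk r = y} =
      insert (FreeGroup.mk w) (R : Set (FreeGroup (Fin n))) := by
    intro w
    ext y
    simp [rs, eq_comm, FreeGroup.mk_toWord]
  have hle : ∀ w : Kuz.W n, N ≤ Subgroup.normalClosure
      (insert (FreeGroup.mk w) (R : Set (FreeGroup (Fin n)))) := fun w =>
    Subgroup.normalClosure_mono (Set.subset_insert _ _)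
  have heq : ∀ w : Kuz.W n, FreeGroup.mk w ∈ N → Subgroup.normalClosure
      (insert (FreeGroup.mk w) (R : Set (FreeGroup (Fin n)))) = N := fun w hw =>
    le_antisymm (Subgroup.normalClosure_le_normal
      (Set.insert_subset hw Subgroup.subset_normalClosure)) (hle w)
  obtain ⟨x, hx⟩ : ∃ x, x ∉ N := by
    by_contra! h
    obtain ⟨a, ha⟩ := exists_ne (1 : FreeGroup (Fin n) ⧸ N)
    induction a using QuotientGroup.induction_on with
    | H a => exact ha ((QuotientGroup.eq_one_iff a).mpr (h a))
  obtain ⟨v, hv⟩ : ∃ v, FreeGroup.mk v = x := ⟨x.toWord, FreeGroup.mk_toWord⟩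
  have hQ := Kuz.re_Q rs
  rw [ComputablePred.computable_iff_re_compl_re']
  constructor
  · have h1 : REPred (fun w : Kuz.W n =>
        ∃ c, FreeGroup.mk (Kuz.P rs [] c) = FreeGroup.mk w) :=
      Kuz.re_comp (f := fun w => (([] : Kuz.W n), w)) hQ (Computable.pair (Computable.const ([] : Kuz.W n)) Computable.id)
    refine h1.of_eq fun w => ?_
    rw [Kuz.mem_iff, hset, heq [] (one_mem N)]
  · have h1 : REPred (fun w : Kuz.W n =>
        ∃ c, FreeGroup.mk (Kuz.P rs w c) = FreeGroup.mk v) :=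
      Kuz.re_comp (f := fun w => (w, v)) hQ (Computable.pair Computable.id (Computable.const v))
    refine h1.of_eq fun w => ?_
    rw [Kuz.mem_iff, hset, hv]
    constructor
    · intro h hw
      rw [heq w hw] at h
      exact hx h
    · intro hw
      set M := Subgroup.normalClosure
        (insert (FreeGroup.mk w) (R : Set (FreeGroup (Fin n)))) with hM
      have hmap : (M.map (QuotientGroup.mk' N)).Normal :=
        Subgroup.normalClosure_normal.map _ (QuotientGroup.mk'_surjective N)
      rcases hmap.eq_bot_or_eq_top with h | h
      · exfalso
        apply hw
        have hm : QuotientGroup.mk' N (FreeGroup.mk w) ∈ M.map (QuotientGroup.mk' N) :=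
          Subgroup.mem_map_of_mem _ (Subgroup.subset_normalClosure (Set.mem_insert _ _))
        rw [h, Subgroup.mem_bot] at hm
        exact (QuotientGroup.eq_one_iff _).mp hm
      · have hm : QuotientGroup.mk' N x ∈ M.map (QuotientGroup.mk' N) := by
          rw [h]; trivial
        obtain ⟨y, hy, hyx⟩ := hm
        have h2 : y⁻¹ * x ∈ N := QuotientGroup.eq.mp hyx
        have := mul_mem hy (hle w h2)
        simpa using this
end

section
/- Boone–Higman theorem (easy direction): Let G be a finitely generated group. Suppose there exist a finitely presented group H, a simple subgroup S of H, and an injective group homomorphism from G into S. Then G has solvable word problem: for every n and every surjective homomorphism π : FreeGroup (Fin n) → G, the set {w : FreeGroup (Fin n) | π w = 1} is computable. -/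
/-- A group is finitely presented if it is isomorphic to the quotient of a finitely
generated free group by the normal closure of a finite set of relators. -/
def IsFinitelyPresented (H : Type*) [Group H] : Prop :=
  ∃ (n : ℕ) (R : Finset (FreeGroup (Fin n))),
    Nonempty (H ≃* FreeGroup (Fin n) ⧸ Subgroup.normalClosure (R : Set (FreeGroup (Fin n))))

namespace BooneHigman

/-- Words over the generators and their inverses. -/
abbrev Word (m : ℕ) := List (Fin m × Bool)

/-- A certificate: a list of (conjugator, relator index, sign). -/
abbrev Cert (m : ℕ) := List (Word m × ℕ × Bool)

/-- One signed conjugate of a relator. -/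
def term {m : ℕ} (rs : List (Word m)) (t : Word m × ℕ × Bool) : Word m :=
  t.1 ++ ((bif t.2.2 then rs.getD t.2.1 [] else FreeGroup.invRev (rs.getD t.2.1 []))
    ++ FreeGroup.invRev t.1)

/-- The product of signed conjugates described by a certificate. -/
def ev {m : ℕ} (rs : List (Word m)) (c : Cert m) : Word m := c.flatMap (term rs)

theorem primrec_invRev (m : ℕ) : Primrec (FreeGroup.invRev : Word m → Word m) := by
  unfold FreeGroup.invRev
  refine Primrec.list_reverse.comp (Primrec.list_map Primrec.id ?_)
  exact (Primrec.pair (Primrec.fst.comp Primrec.snd)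
    (Primrec.not.comp (Primrec.snd.comp Primrec.snd))).to₂

theorem primrec_term (m : ℕ) : Primrec₂ (term : List (Word m) → _ → Word m) := by
  have hget : Primrec fun p : List (Word m) × (Word m × ℕ × Bool) =>
      p.1.getD p.2.2.1 [] :=
    (Primrec.list_getD ([] : Word m)).comp Primrec.fst
      (Primrec.fst.comp (Primrec.snd.comp Primrec.snd))
  have hb : Primrec fun p : List (Word m) × (Word m × ℕ × Bool) => p.2.2.2 :=
    Primrec.snd.comp (Primrec.snd.comp Primrec.snd)
  have hg : Primrec fun p : List (Word m) × (Word m × ℕ × Bool) => p.2.1 :=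
    Primrec.fst.comp Primrec.snd
  exact Primrec.list_append.comp hg (Primrec.list_append.comp
    (Primrec.cond hb hget ((primrec_invRev m).comp hget)) ((primrec_invRev m).comp hg))

theorem primrec_ev (m : ℕ) : Primrec₂ (ev : List (Word m) → _ → Word m) := by
  refine Primrec.list_flatMap Primrec.snd ?_
  exact (primrec_term m).comp (Primrec.fst.comp Primrec.fst) Primrec.snd

/-- One step of free reduction. -/
def redStep {m : ℕ} (x : Fin m × Bool) (l : Word m) : Word m :=
  List.casesOn l [x] fun hd tl => if x = (hd.1, !hd.2) then tl else x :: hd :: tl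

theorem reduce_eq_foldr {m : ℕ} (l : Word m) :
    FreeGroup.reduce l = l.foldr redStep [] := by
  induction l with
  | nil => rfl
  | cons x l ih =>
    rw [FreeGroup.reduce.cons, List.foldr_cons, ← ih]
    unfold redStep
    cases FreeGroup.reduce l with
    | nil => rfl
    | cons hd tl => simp [Prod.ext_iff]

theorem primrec_reduce (m : ℕ) : Primrec (FreeGroup.reduce : Word m → Word m) := by
  have h : Primrec fun l : Word m => l.foldr redStep [] := by
    refine Primrec.list_foldr (f := fun l : Word m => l) (g := fun _ => ([] : Word m))
      (h := fun _ p => redStep p.1 p.2) Primrec.id (Primrec.const _) ?_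
    have hx : Primrec fun q : (Word m × ((Fin m × Bool) × Word m)) => q.2.1 :=
      Primrec.fst.comp Primrec.snd
    refine Primrec.list_casesOn (f := fun q : (Word m × ((Fin m × Bool) × Word m)) => q.2.2)
      (g := fun q => [q.2.1])
      (h := fun q z => if q.2.1 = (z.1.1, !z.1.2) then z.2 else q.2.1 :: z.1 :: z.2)
      (Primrec.snd.comp Primrec.snd)
      (Primrec.list_cons.comp hx (Primrec.const [])) ?_
    have hx' := hx.comp (Primrec.fst (α := (Word m × ((Fin m × Bool) × Word m)))
      (β := (Fin m × Bool) × Word m))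
    have hz : Primrec fun q : (Word m × ((Fin m × Bool) × Word m)) × ((Fin m × Bool) × Word m) =>
      q.2.1 := Primrec.fst.comp Primrec.snd
    have ht : Primrec fun q : (Word m × ((Fin m × Bool) × Word m)) × ((Fin m × Bool) × Word m) =>
      q.2.2 := Primrec.snd.comp Primrec.snd
    exact Primrec.ite
      (Primrec.eq.comp hx' (Primrec.pair (Primrec.fst.comp hz)
        (Primrec.not.comp (Primrec.snd.comp hz)))) ht
      (Primrec.list_cons.comp hx' (Primrec.list_cons.comp hz ht))
  exact h.of_eq fun l => (reduce_eq_foldr l).symm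

theorem mk_term {m : ℕ} (rs : List (Word m)) (t : Word m × ℕ × Bool) :
    FreeGroup.mk (term rs t) = FreeGroup.mk t.1 *
      (bif t.2.2 then FreeGroup.mk (rs.getD t.2.1 []) else (FreeGroup.mk (rs.getD t.2.1 []))⁻¹)
      * (FreeGroup.mk t.1)⁻¹ := by
  rcases t with ⟨g, i, b⟩
  cases b <;> simp [term, FreeGroup.inv_mk, FreeGroup.mul_mk]

theorem mk_ev_append {m : ℕ} (rs : List (Word m)) (c d : Cert m) :
    FreeGroup.mk (ev rs (c ++ d)) = FreeGroup.mk (ev rs c) * FreeGroup.mk (ev rs d) := by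
  simp [ev, FreeGroup.mul_mk]

theorem mk_ev_mem {m : ℕ} (rs : List (Word m)) (c : Cert m) :
    FreeGroup.mk (ev rs c) ∈ Subgroup.normalClosure {x | ∃ r ∈ rs, FreeGroup.mk r = x} := by
  induction c with
  | nil => exact Subgroup.one_mem _
  | cons t c ih =>
    have : ev rs (t :: c) = term rs t ++ ev rs c := rfl
    rw [this, ← FreeGroup.mul_mk, mk_term]
    refine Subgroup.mul_mem _ (Subgroup.normalClosure_normal.conj_mem _ ?_ _) ih
    have h : FreeGroup.mk (rs.getD t.2.1 []) ∈
        Subgroup.normalClosure {x | ∃ r ∈ rs, FreeGroup.mk r = x} := by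
      by_cases hi : t.2.1 < rs.length
      · rw [List.getD_eq_getElem _ _ hi]
        exact Subgroup.subset_normalClosure ⟨_, List.getElem_mem hi, rfl⟩
      · rw [List.getD_eq_default _ _ (not_lt.mp hi)]
        exact Subgroup.one_mem _
    cases t.2.2
    · exact Subgroup.inv_mem _ h
    · exact h

theorem mem_iff {m : ℕ} (rs : List (Word m)) (x : FreeGroup (Fin m)) :
    x ∈ Subgroup.normalClosure {x | ∃ r ∈ rs, FreeGroup.mk r = x} ↔
      ∃ c, FreeGroup.mk (ev rs c) = x := by
  constructor
  · intro hx
    suffices h : (∃ c, FreeGroup.mk (ev rs c) = x) ∧ (∃ c, FreeGroup.mk (ev rs c) = x⁻¹) from h.1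
    unfold Subgroup.normalClosure at hx
    induction hx using Subgroup.closure_induction with
    | mem x hx =>
      obtain ⟨y, ⟨r, hr, rfl⟩, hy⟩ := Group.mem_conjugatesOfSet_iff.1 hx
      obtain ⟨g, rfl⟩ := isConj_iff.1 hy
      obtain ⟨i, hi, rfl⟩ := List.getElem_of_mem hr
      have key : ∀ b, FreeGroup.mk (ev rs [(g.toWord, i, b)]) =
          g * (bif b then FreeGroup.mk rs[i] else (FreeGroup.mk rs[i])⁻¹) * g⁻¹ := by
        intro b
        have : ev rs [(g.toWord, i, b)] = term rs (g.toWord, i, b) := by simp [ev]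
        rw [this, mk_term, List.getD_eq_getElem _ _ hi, FreeGroup.mk_toWord]
      refine ⟨⟨_, key true⟩, ⟨_, (key false).trans ?_⟩⟩
      simp [mul_assoc]
    | one => exact ⟨⟨[], rfl⟩, ⟨[], by simp [ev, FreeGroup.one_eq_mk]⟩⟩
    | mul x y _ _ hx hy =>
      obtain ⟨⟨c, hc⟩, ⟨c', hc'⟩⟩ := hx
      obtain ⟨⟨d, hd⟩, ⟨d', hd'⟩⟩ := hy
      exact ⟨⟨c ++ d, by rw [mk_ev_append, hc, hd]⟩,
        ⟨d' ++ c', by rw [mk_ev_append, hc', hd', mul_inv_rev]⟩⟩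
    | inv x _ hx => exact ⟨hx.2, by simpa using hx.1⟩
  · rintro ⟨c, rfl⟩
    exact mk_ev_mem rs c

/-- Membership in a normal closure is recursively enumerable, uniformly. -/
theorem re_mem {α : Type*} [Primcodable α] {m : ℕ} {u : α → Word m} {rs : α → List (Word m)}
    (hu : Primrec u) (hrs : Primrec rs) :
    REPred fun a => FreeGroup.mk (u a) ∈
      Subgroup.normalClosure {x | ∃ r ∈ rs a, FreeGroup.mk r = x} := by
  let f : α → ℕ → Option Unit := fun a k =>
    (Encodable.decode (α := Cert m) k).bind fun c =>
      if FreeGroup.reduce (ev (rs a) c) = FreeGroup.reduce (u a) then some () else none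
  have hf : Primrec₂ f := by
    refine Primrec.option_bind (Primrec.decode.comp Primrec.snd) ?_
    refine Primrec.ite (Primrec.eq.comp
      ((primrec_reduce m).comp ((primrec_ev m).comp
        (hrs.comp (Primrec.fst.comp Primrec.fst)) Primrec.snd))
      ((primrec_reduce m).comp (hu.comp (Primrec.fst.comp Primrec.fst))))
      (Primrec.const _) (Primrec.const _)
  have hp : Partrec fun a => Nat.rfindOpt (f a) := Partrec.rfindOpt hf.to_comp
  refine hp.dom_re.of_eq fun a => ?_
  rw [Nat.rfindOpt_dom, mem_iff]
  have hred : ∀ c, FreeGroup.reduce (ev (rs a) c) = FreeGroup.reduce (u a) ↔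
      FreeGroup.mk (ev (rs a) c) = FreeGroup.mk (u a) := fun c => by
    rw [← FreeGroup.toWord_inj, FreeGroup.toWord_mk, FreeGroup.toWord_mk]
  constructor
  · rintro ⟨k, b, hb⟩
    simp only [f, Option.mem_def, Option.bind_eq_some_iff] at hb
    obtain ⟨c, -, hc⟩ := hb
    refine ⟨c, (hred c).1 ?_⟩
    by_contra h
    simp [h] at hc
  · rintro ⟨c, hc⟩
    refine ⟨Encodable.encode c, (), ?_⟩
    simp [f, (hred c).2 hc]

end BooneHigman

open BooneHigman in
theorem boone_higman_easy_direction (G : Type*) [Group G] [Group.FG G]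
    (H : Type*) [Group H] (hH : IsFinitelyPresented H)
    (S : Subgroup H) (hS : IsSimpleGroup S)
    (φ : G →* S) (hφ : Function.Injective φ) :
    ∀ (n : ℕ) (π : FreeGroup (Fin n) →* G), Function.Surjective π →
      ComputablePred (fun w : List (Fin n × Bool) => π (FreeGroup.mk w) = 1) := by
  intro n π _
  obtain ⟨m, R, ⟨e⟩⟩ := hH
  -- the projection from the free group onto `H`
  let q : FreeGroup (Fin m) →* H := e.symm.toMonoidHom.comp (QuotientGroup.mk' _)
  have hq : Function.Surjective q :=
    e.symm.surjective.comp (QuotientGroup.mk'_surjective _)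
  have hker : ∀ x, q x = 1 ↔ x ∈ Subgroup.normalClosure (R : Set (FreeGroup (Fin m))) := by
    intro x
    simp [q]
  -- words for the images of the generators
  have hw : ∀ i : Fin n × Bool, ∃ v : Word m,
      q (FreeGroup.mk v) = (φ (π (FreeGroup.mk [i])) : H) := by
    intro i
    obtain ⟨y, hy⟩ := hq (φ (π (FreeGroup.mk [i])) : H)
    exact ⟨y.toWord, by rw [FreeGroup.mk_toWord, hy]⟩
  choose wd hwd using hw
  let sub : Word n → Word m := fun w => w.flatMap wd
  have hsub : ∀ w, q (FreeGroup.mk (sub w)) = (φ (π (FreeGroup.mk w)) : H) := by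
    intro w
    induction w with
    | nil => simp [sub, ← FreeGroup.one_eq_mk]
    | cons i w ih =>
      have h1 : sub (i :: w) = wd i ++ sub w := rfl
      have h2 : FreeGroup.mk (i :: w) = FreeGroup.mk [i] * FreeGroup.mk w := by
        simp [FreeGroup.mul_mk]
      rw [h1, ← FreeGroup.mul_mk, map_mul, ih, hwd, h2, map_mul, map_mul, Subgroup.coe_mul]
  have hsubp : Primrec sub :=
    Primrec.list_flatMap Primrec.id ((Primrec.dom_finite wd).comp Primrec.snd).to₂
  have hone : ∀ w, π (FreeGroup.mk w) = 1 ↔ q (FreeGroup.mk (sub w)) = 1 := by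
    intro w
    rw [hsub, OneMemClass.coe_eq_one, map_eq_one_iff φ hφ]
  let rs : List (Word m) := R.toList.map FreeGroup.toWord
  have hrs : {x | ∃ r ∈ rs, FreeGroup.mk r = x} = (R : Set (FreeGroup (Fin m))) := by
    ext x
    simp [rs, FreeGroup.mk_toWord]
  obtain ⟨s, hs⟩ := exists_ne (1 : S)
  obtain ⟨s', hs'⟩ := hq s
  refine ComputablePred.computable_iff_re_compl_re'.2 ⟨?_, ?_⟩
  · refine (re_mem hsubp (Primrec.const rs)).of_eq fun w => ?_
    rw [hrs, hone, hker]
  · refine (re_mem (Primrec.const s'.toWord)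
      (Primrec.list_cons.comp hsubp (Primrec.const rs))).of_eq fun w => ?_
    have hset : {x | ∃ r ∈ sub w :: rs, FreeGroup.mk r = x} =
        insert (FreeGroup.mk (sub w)) (R : Set (FreeGroup (Fin m))) := by
      rw [← hrs]
      ext x
      simp [eq_comm]
    rw [hset, FreeGroup.mk_toWord]
    constructor
    · intro hmem h1
      have hle : Subgroup.normalClosure
          (insert (FreeGroup.mk (sub w)) (R : Set (FreeGroup (Fin m)))) ≤ q.ker := by
        refine Subgroup.normalClosure_le_normal ?_
        rintro x (rfl | hx)
        · exact (hone w).1 h1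
        · exact (hker x).2 (Subgroup.subset_normalClosure hx)
      have : q s' = 1 := hle hmem
      rw [hs'] at this
      exact hs (by exact_mod_cast this)
    · intro h1
      set N := Subgroup.normalClosure
        (insert (FreeGroup.mk (sub w)) (R : Set (FreeGroup (Fin m)))) with hN
      have hNn : N.Normal := Subgroup.normalClosure_normal
      have hkerN : q.ker ≤ N := fun x hx =>
        Subgroup.normalClosure_mono (Set.subset_insert _ _) ((hker x).1 hx)
      have hM : (N.map q).Normal := hNn.map q hq
      have hK : ((N.map q).subgroupOf S).Normal := inferInstance
      have hmem : φ (π (FreeGroup.mk w)) ∈ (N.map q).subgroupOf S := by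
        rw [Subgroup.mem_subgroupOf, ← hsub]
        exact Subgroup.mem_map_of_mem q (Subgroup.subset_normalClosure (Set.mem_insert _ _))
      rcases hK.eq_bot_or_eq_top with h | h
      · rw [h, Subgroup.mem_bot, map_eq_one_iff φ hφ] at hmem
        exact absurd hmem h1
      · have : s ∈ (N.map q).subgroupOf S := by rw [h]; trivial
        rw [Subgroup.mem_subgroupOf, ← hs'] at this
        obtain ⟨y, hy, hys⟩ := this
        have : y⁻¹ * s' ∈ N := hkerN (by rw [MonoidHom.mem_ker, map_mul, map_inv, hys]; simp)
        simpa using N.mul_mem hy this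
end
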